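/- arXiv:2012.14801 — 2 statements merged into one kernel-verified Lean document; each statement's English description precedes it below -/
import Mathlib

section
/- Let n ≥ 5 and let a : Fin n → ℚ with a i ≠ 0 for every i. If the diagonal quadratic form q(x) = ∑ i, a i * (x i)^2 is indefinite, i.e. there exist indices i and j with a i > 0 and a j < 0, then q is isotropic over ℚ: there exists x : Fin n → ℚ with x ≠ 0 and ∑ i, a i * (x i)^2 = 0. (Meyer's theorem.) -/
/-!
An orthogonal sum `⟨a, b⟩ ⊥ ⟨c, d, e⟩` is isotropic as soon as some `t ≠ 0` makes both `⟨-t, a, b⟩`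
and `⟨t, c, d, e⟩` isotropic. In five variables such a `t` exists over `ℝ` and over `ℚ_[p]` for
every odd prime `p`. By Dirichlet's theorem there is an integer `t` with the right square class over
`ℝ` and at the odd primes dividing `a * b * c * d * e`, whose only other odd prime factor is one new
prime `l`. The residue of `l` modulo `8` is still free, and by quadratic reciprocity it can be
chosen to make `-(a * b)` a square modulo `l`, so that `⟨-t, a, b⟩` is isotropic at `l` too.

Splitting `⟨t, c, d, e⟩` as `⟨t, c⟩ ⊥ ⟨d, e⟩` in the same way leaves only ternary forms, to which
Legendre's theorem applies; its descent never looks at the prime `2`. Now one residue modulo `8` has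
to serve the symbols of both `-(t * c)` and `-(d * e)`, which is possible when, up to squares, the
first is `2` and the second `3` modulo `4`. Ordering five coefficients by their classes in `ℚ_[2]`
always achieves this.
-/

open Matrix (vecCons cons_val cons_val_zero cons_val_one cons_val_succ)
open scoped NumberTheorySymbols

/-- The diagonal quadratic form `∑ i, a i * x i ^ 2` has a nontrivial zero over the field `K`. -/
def DiagonalIsotropic {ι K : Type*} [Fintype ι] [Field K] (a : ι → K) : Prop :=
  ∃ x : ι → K, x ≠ 0 ∧ ∑ i, a i * x i ^ 2 = 0

section Tuples

variable {α β : Type*} {m n : ℕ}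

theorem comp_vecCons (f : α → β) (a : α) (v : Fin n → α) :
    f ∘ vecCons a v = vecCons (f a) (f ∘ v) :=
  Fin.comp_cons f a v

theorem comp_vecEmpty (f : α → β) : f ∘ ![] = ![] :=
  Subsingleton.elim _ _

theorem comp_append (f : α → β) (v : Fin m → α) (w : Fin n → α) :
    f ∘ Fin.append v w = Fin.append (f ∘ v) (f ∘ w) :=
  funext <| Fin.addCases (by simp) (by simp)

theorem prod_append {M : Type*} [CommMonoid M] (v : Fin m → M) (w : Fin n → M) :
    ∏ i, Fin.append v w i = (∏ i, v i) * ∏ j, w j := by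
  simp [Fin.prod_univ_add]

end Tuples

section Field

variable {K : Type*} [Field K] {ι κ : Type*} [Fintype ι] [Fintype κ]

namespace DiagonalIsotropic

theorem of_comp {a : κ → K} {f : ι → κ} (hf : f.Injective) (h : DiagonalIsotropic (a ∘ f)) :
    DiagonalIsotropic a := by
  obtain ⟨x, hx, hsum⟩ := h
  refine ⟨Function.extend f x 0, fun h0 => hx (funext fun i => ?_), ?_⟩
  · simpa [hf.extend_apply] using congrFun h0 (f i)
  · rw [← hsum]
    refine (Fintype.sum_of_injective f hf _ _ (fun k hk => ?_) fun i => ?_).symm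
    · simp [Function.extend_apply' _ _ _ (by simpa using hk)]
    · simp [hf.extend_apply]

theorem vecCons {n : ℕ} {v : Fin n → K} (h : DiagonalIsotropic v) (t : K) :
    DiagonalIsotropic (vecCons t v) :=
  of_comp (Fin.succ_injective n) h

theorem of_mul_sq {a q : ι → K} (hq : ∀ i, q i ≠ 0)
    (h : DiagonalIsotropic fun i => a i * q i ^ 2) : DiagonalIsotropic a := by
  obtain ⟨x, hx, hsum⟩ := h
  refine ⟨q * x, fun h0 => hx (funext fun i => ?_), ?_⟩
  · simpa [hq i] using congrFun h0 i
  · simpa [mul_pow, mul_assoc] using hsum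

theorem vecCons_of_isSquare_mul {n : ℕ} {v : Fin n → K} {s t : K} (hs : s ≠ 0) (ht : t ≠ 0)
    (hst : IsSquare (s * t)) (h : DiagonalIsotropic (Matrix.vecCons s v)) :
    DiagonalIsotropic (Matrix.vecCons t v) := by
  obtain ⟨r, hr⟩ := hst
  have hr0 : r ≠ 0 := by
    rintro rfl
    simp [hs, ht] at hr
  refine of_mul_sq (q := Matrix.vecCons (r / t) 1)
    (Fin.cases (div_ne_zero hr0 ht) fun _ => one_ne_zero) ?_
  convert h using 1
  refine funext (Fin.cases ?_ fun _ => by simp)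
  simp only [cons_val_zero]
  field_simp
  linear_combination -hr

theorem smul {a : ι → K} (h : DiagonalIsotropic a) (c : K) : DiagonalIsotropic (c • a) := by
  obtain ⟨x, hx, hsum⟩ := h
  exact ⟨x, hx, by simp [mul_assoc, ← Finset.mul_sum, hsum]⟩

end DiagonalIsotropic

theorem diagonalIsotropic_vecCons_neg_self {n : ℕ} (v : Fin n → K) (i : Fin n) :
    DiagonalIsotropic (vecCons (-v i) v) :=
  ⟨vecCons 1 (Pi.single i 1), fun h => one_ne_zero (congrFun h 0), by
    simp [Fin.sum_univ_succ, Pi.single_apply]⟩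

theorem DiagonalIsotropic.exists_common_value {m n : ℕ} [NeZero m] [NeZero n] {v : Fin m → K}
    {w : Fin n → K} (hv : ∀ i, v i ≠ 0) (hw : ∀ j, w j ≠ 0)
    (h : DiagonalIsotropic (Fin.append v w)) :
    ∃ t : K, t ≠ 0 ∧ DiagonalIsotropic (Matrix.vecCons (-t) v) ∧
      DiagonalIsotropic (Matrix.vecCons t w) := by
  obtain ⟨x, hx, hsum⟩ := h
  set y : Fin m → K := fun i => x (Fin.castAdd n i)
  set z : Fin n → K := fun j => x (Fin.natAdd m j)
  have hyz : ∑ i, v i * y i ^ 2 + ∑ j, w j * z j ^ 2 = 0 := by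
    simpa [Fin.sum_univ_add] using hsum
  by_cases ht : ∑ i, v i * y i ^ 2 = 0
  · by_cases hy : y = 0
    · have hz : z ≠ 0 := fun hz => hx <| funext <| Fin.addCases (congrFun hy) (congrFun hz)
      have hw0 : DiagonalIsotropic w := ⟨z, hz, by simpa [ht] using hyz⟩
      exact ⟨v 0, hv 0, diagonalIsotropic_vecCons_neg_self v 0, hw0.vecCons _⟩
    · have hv0 : DiagonalIsotropic v := ⟨y, hy, ht⟩
      exact ⟨-w 0, neg_ne_zero.2 (hw 0), hv0.vecCons _, diagonalIsotropic_vecCons_neg_self w 0⟩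
  · refine ⟨_, ht, ⟨Matrix.vecCons 1 y, ?_, by simp [Fin.sum_univ_succ]⟩,
      ⟨Matrix.vecCons 1 z, ?_, by simpa [Fin.sum_univ_succ] using hyz⟩⟩ <;>
    exact fun h => one_ne_zero (congrFun h 0)

theorem diagonalIsotropic_append_of_common_value {m n : ℕ} {v : Fin m → K} {w : Fin n → K} {t : K}
    (ht : t ≠ 0) (hv : DiagonalIsotropic (vecCons (-t) v)) (hw : DiagonalIsotropic (vecCons t w)) :
    DiagonalIsotropic (Fin.append v w) := by
  obtain ⟨y, hy, hvy⟩ := hv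
  obtain ⟨z, hz, hwz⟩ := hw
  rw [Fin.sum_univ_succ] at hvy hwz
  simp only [cons_val_zero, cons_val_succ] at hvy hwz
  by_cases hy0 : y 0 = 0
  · refine ⟨Fin.append (y ∘ Fin.succ) 0, fun h => hy ?_, ?_⟩
    · exact funext <| Fin.cases hy0 fun i => by simpa using congrFun h (Fin.castAdd n i)
    · simpa [Fin.sum_univ_add, hy0] using hvy
  -- scaling the two zeros to have first coordinate `y 0 * z 0` makes the `t`-terms cancel
  · refine ⟨Fin.append (z 0 • y ∘ Fin.succ) (y 0 • z ∘ Fin.succ), fun h => hz ?_, ?_⟩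
    · have hzsucc (j : Fin n) : z j.succ = 0 := by
        simpa [hy0] using congrFun h (Fin.natAdd m j)
      have hz0 : z 0 = 0 := by simpa [hzsucc, ht] using hwz
      exact funext <| Fin.cases hz0 hzsucc
    · simp only [Fin.sum_univ_add, Fin.append_left, Fin.append_right, Pi.smul_apply,
        Function.comp_apply, smul_eq_mul, mul_pow, mul_left_comm _ (_ ^ 2), ← Finset.mul_sum]
      linear_combination z 0 ^ 2 * hvy + y 0 ^ 2 * hwz

theorem diagonalIsotropic_three_iff {a b c : K} :
    DiagonalIsotropic ![a, b, c] ↔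
      ∃ x y z : K, (x ≠ 0 ∨ y ≠ 0 ∨ z ≠ 0) ∧ a * x ^ 2 + b * y ^ 2 + c * z ^ 2 = 0 := by
  constructor
  · rintro ⟨x, hx, hsum⟩
    refine ⟨x 0, x 1, x 2, ?_, by simpa [Fin.sum_univ_three] using hsum⟩
    contrapose! hx
    ext i
    fin_cases i <;> simp [hx]
  · rintro ⟨x, y, z, hne, hsum⟩
    refine ⟨![x, y, z], fun h => ?_, by simpa [Fin.sum_univ_three] using hsum⟩
    simp_all

theorem diagonalIsotropic_two_of_isSquare {a b : K} (ha : a ≠ 0) (h : IsSquare (-(a * b))) :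
    DiagonalIsotropic ![a, b] := by
  obtain ⟨r, hr⟩ := h
  refine ⟨![r, a], fun h => ha (congrFun h 1), ?_⟩
  rw [Fin.sum_univ_two]
  simp only [cons_val_zero, cons_val_one]
  linear_combination -a * hr

theorem diagonalIsotropic_one_mul_mul_iff {a b c : K} (ha : a ≠ 0) :
    DiagonalIsotropic ![1, a * b, a * c] ↔ DiagonalIsotropic ![a, b, c] := by
  simp only [diagonalIsotropic_three_iff]
  constructor
  · rintro ⟨x, y, z, hne, h⟩
    refine ⟨x / a, y, z, by simpa [ha] using hne, ?_⟩
    field_simp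
    linear_combination h
  · rintro ⟨x, y, z, hne, h⟩
    exact ⟨a * x, y, z, by simpa [ha] using hne, by linear_combination a * h⟩

theorem DiagonalIsotropic.swap {a b c : K} (h : DiagonalIsotropic ![a, b, c]) :
    DiagonalIsotropic ![a, c, b] := by
  rw [diagonalIsotropic_three_iff] at h ⊢
  obtain ⟨x, y, z, hne, h⟩ := h
  exact ⟨x, z, y, by tauto, by linear_combination h⟩

-- Multiplicativity of the norm form `z ^ 2 + a * x ^ 2`.
theorem DiagonalIsotropic.of_sq_add_eq_mul {a b b' t : K} (ht : t ^ 2 + a = b * b')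
    (h : DiagonalIsotropic ![1, a, b]) : DiagonalIsotropic ![1, a, b'] := by
  rw [diagonalIsotropic_three_iff] at h ⊢
  by_cases hb : b = 0
  · exact ⟨t, 1, 0, by simp, by linear_combination ht + b' * hb⟩
  obtain ⟨z, x, y, hne, h⟩ := h
  by_cases hy : y = 0
  · subst hy
    exact ⟨z, x, 0, hne, by linear_combination h⟩
  · exact ⟨z * t - a * x, z + t * x, b * y, .inr (.inr (mul_ne_zero hb hy)), by
      linear_combination (t ^ 2 + a) * h - b * y ^ 2 * ht⟩

theorem diagonalIsotropic_one_mul_sq_iff {a b x : K} (hx : x ≠ 0) :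
    DiagonalIsotropic ![1, a, x ^ 2 * b] ↔ DiagonalIsotropic ![1, a, b] := by
  simp only [diagonalIsotropic_three_iff]
  constructor
  · rintro ⟨u, v, w, hne, h⟩
    exact ⟨u, v, x * w, by simpa [hx] using hne, by linear_combination h⟩
  · rintro ⟨u, v, w, hne, h⟩
    refine ⟨u, v, w / x, by simpa [hx] using hne, ?_⟩
    field_simp
    linear_combination h

end Field

section Padic

open PadicInt

variable {p : ℕ} [Fact p.Prime] {ι : Type*} [Fintype ι]

theorem isUnit_iff_toZMod_ne_zero {u : ℤ_[p]} : IsUnit u ↔ toZMod u ≠ 0 := by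
  rw [Ne, ← RingHom.mem_ker, ker_toZMod, IsLocalRing.mem_maximalIdeal, mem_nonunits_iff, not_not]

theorem isUnit_intCast_padicInt_iff {n : ℤ} : IsUnit (n : ℤ_[p]) ↔ ¬ (p : ℤ) ∣ n := by
  rw [isUnit_iff_toZMod_ne_zero, map_intCast, Ne, ZMod.intCast_zmod_eq_zero_iff_dvd]

theorem isSquare_of_isSquare_toZMod (hp : p ≠ 2) {u : ℤ_[p]} (hu : IsUnit u)
    (h : IsSquare (toZMod u)) : IsSquare u := by
  obtain ⟨r, hr⟩ := h
  obtain ⟨a, rfl⟩ := ZMod.ringHom_surjective (toZMod (p := p)) r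
  have ha : IsUnit (2 * a) := by
    rw [isUnit_iff_toZMod_ne_zero] at hu ⊢
    have h2 : (2 : ZMod p) ≠ 0 := Ring.two_ne_zero (by rwa [ZMod.ringChar_zmod_n])
    rw [map_mul, map_ofNat]
    exact mul_ne_zero h2 (left_ne_zero_of_mul (hr ▸ hu))
  have hF : ‖a ^ 2 - u‖ < 1 := by
    rw [← not_isUnit_iff, isUnit_iff_toZMod_ne_zero, not_not]
    simp [hr, sq]
  obtain ⟨z, hz, -⟩ := hensels_lemma (F := Polynomial.X ^ 2 - Polynomial.C u) (a := a) (by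
    simpa [PadicInt.isUnit_iff.1 ha, Polynomial.derivative_X_pow, one_add_one_eq_two] using hF)
  have hz : z ^ 2 - u = 0 := by simpa using hz
  exact ⟨z, by linear_combination -hz⟩

theorem isSquare_padic_of_jacobiSym_eq_one (hp : p ≠ 2) {n : ℤ} (h : J(n | p) = 1) :
    IsSquare (n : ℚ_[p]) := by
  have hn : ¬ (p : ℤ) ∣ n := fun hdvd => by
    rw [← jacobiSym.legendreSym.to_jacobiSym, (legendreSym.eq_zero_iff p n).2
      ((ZMod.intCast_zmod_eq_zero_iff_dvd n p).2 hdvd)] at h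
    exact zero_ne_one h
  have hsq : IsSquare (n : ℤ_[p]) := isSquare_of_isSquare_toZMod hp
    (isUnit_intCast_padicInt_iff.2 hn) (by simpa using ZMod.isSquare_of_jacobiSym_eq_one h)
  simpa using hsq.map (Coe.ringHom (p := p))

theorem diagonalIsotropic_padic_of_toZMod (hp : p ≠ 2) {a : ι → ℤ_[p]} {x : ι → ZMod p}
    (hx : ∑ i, toZMod (a i) * x i ^ 2 = 0) {i : ι} (hai : IsUnit (a i)) (hxi : x i ≠ 0) :
    DiagonalIsotropic fun i => (a i : ℚ_[p]) := by
  classical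
  choose X hX using fun j => ZMod.ringHom_surjective (toZMod (p := p)) (x j)
  set r : ℤ_[p] := ∑ j ∈ {i}ᶜ, a j * X j ^ 2
  have hr : toZMod (-r * a i) = toZMod (a i) * x i * (toZMod (a i) * x i) := by
    rw [Fintype.sum_eq_add_sum_compl i] at hx
    simp only [r, map_mul, map_neg, map_sum, map_pow, hX]
    linear_combination -toZMod (a i) * hx
  have hunit : IsUnit (-r * a i) := by
    rw [isUnit_iff_toZMod_ne_zero] at hai ⊢
    rw [hr]
    exact mul_self_ne_zero.2 (mul_ne_zero hai hxi)
  obtain ⟨s, hs⟩ := isSquare_of_isSquare_toZMod hp hunit ⟨_, hr⟩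
  refine ⟨fun j => (Function.update (a i • X) i s j : ℤ_[p]), fun h => ?_, ?_⟩
  · have hs0 : s = 0 := by simpa using congrFun h i
    exact hunit.ne_zero (by rw [hs, hs0, zero_mul])
  · have hcompl : ∑ j ∈ {i}ᶜ, a j * Function.update (a i • X) i s j ^ 2 = a i ^ 2 * r := by
      rw [Finset.mul_sum]
      refine Finset.sum_congr rfl fun j hj => ?_
      rw [Function.update_of_ne (by simpa using hj), Pi.smul_apply, smul_eq_mul]
      ring
    have hsum : ∑ j, a j * Function.update (a i • X) i s j ^ 2 = 0 := by
      rw [Fintype.sum_eq_add_sum_compl i, hcompl, Function.update_self]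
      linear_combination -a i * hs
    simpa using congrArg ((↑) : ℤ_[p] → ℚ_[p]) hsum

theorem exists_zmod_quadratic_eq_zero (hp : p ≠ 2) {a b : ZMod p} (c : ZMod p) (ha : a ≠ 0)
    (hb : b ≠ 0) : ∃ x y : ZMod p, a * x ^ 2 + b * y ^ 2 + c = 0 := by
  open Polynomial in
  obtain ⟨x, y, h⟩ := FiniteField.exists_root_sum_quadratic (f := C a * X ^ 2)
    (g := C b * X ^ 2 + C 0 * X + C c) (by compute_degree!) (degree_quadratic hb)
    (by rw [ZMod.card]; exact (Nat.Prime.eq_two_or_odd Fact.out).resolve_left hp)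
  exact ⟨x, y, by simpa [add_assoc] using h⟩

theorem diagonalIsotropic_padic_of_isUnit (hp : p ≠ 2) (hι : 3 ≤ Fintype.card ι) {a : ι → ℤ_[p]}
    (ha : ∀ i, IsUnit (a i)) : DiagonalIsotropic fun i => (a i : ℚ_[p]) := by
  obtain ⟨f⟩ : Nonempty (Fin 3 ↪ ι) := Function.Embedding.nonempty_of_card_le (by simpa using hι)
  have hne (i : ι) : toZMod (a i) ≠ 0 := isUnit_iff_toZMod_ne_zero.1 (ha i)
  obtain ⟨x, y, h⟩ := exists_zmod_quadratic_eq_zero hp (toZMod (a (f 2))) (hne (f 0)) (hne (f 1))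
  exact .of_comp f.injective <| diagonalIsotropic_padic_of_toZMod hp (a := a ∘ f) (x := ![x, y, 1])
    (by simpa [Fin.sum_univ_three] using h) (i := 2) (ha _) (by simp)

theorem diagonalIsotropic_padic_of_not_dvd (hp : p ≠ 2) (hι : 3 ≤ Fintype.card ι) {a : ι → ℤ}
    (ha : ∀ i, ¬ (p : ℤ) ∣ a i) : DiagonalIsotropic ((↑) ∘ a : ι → ℚ_[p]) := by
  simpa [Function.comp_def] using
    diagonalIsotropic_padic_of_isUnit hp hι (a := fun i => (a i : ℤ_[p])) fun i =>
      isUnit_intCast_padicInt_iff.2 (ha i)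

theorem exists_eq_zpow_valuation_mul_unit {t : ℚ_[p]} (ht : t ≠ 0) :
    ∃ u : ℤ_[p]ˣ, t = p ^ t.valuation * (u : ℤ_[p]) := by
  have hp0 : (p : ℚ_[p]) ≠ 0 := by simp [(Fact.out : p.Prime).ne_zero]
  have hpR : (p : ℝ) ≠ 0 := by simp [(Fact.out : p.Prime).ne_zero]
  have hunit : ‖t * (p : ℚ_[p]) ^ (-t.valuation)‖ = 1 := by
    rw [norm_mul, Padic.norm_eq_zpow_neg_valuation ht, Padic.norm_p_zpow, neg_neg,
      ← zpow_add₀ hpR, neg_add_cancel, zpow_zero]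
  refine ⟨mkUnits hunit, ?_⟩
  rw [mkUnits_eq, mul_left_comm, ← zpow_add₀ hp0, add_neg_cancel, zpow_zero, mul_one]

theorem diagonalIsotropic_padic_of_five_le_card (hp : p ≠ 2) (hι : 5 ≤ Fintype.card ι)
    {a : ι → ℚ_[p]} (ha : ∀ i, a i ≠ 0) : DiagonalIsotropic a := by
  classical
  have hp0 : (p : ℚ_[p]) ≠ 0 := by simp [(Fact.out : p.Prime).ne_zero]
  choose u hu using fun i => exists_eq_zpow_valuation_mul_unit (ha i)
  obtain ⟨e, he⟩ := Fintype.exists_lt_card_fiber_of_mul_lt_card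
    (fun i => ((a i).valuation : ZMod 2)) (n := 2) (by simpa using Nat.lt_of_succ_le hι)
  rw [← Fintype.card_subtype] at he
  have hunits := diagonalIsotropic_padic_of_isUnit hp he
    (fun i : {i // ((a i).valuation : ZMod 2) = e} => (u i).isUnit)
  have hpow (n : ℤ) : (p : ℚ_[p]) ^ n * (p ^ (-(n / 2))) ^ 2 = p ^ (n % 2) := by
    rw [← zpow_natCast, ← zpow_mul, ← zpow_add₀ hp0]
    congr 1
    push_cast
    omega
  have hscaled (i : ι) (hi : ((a i).valuation : ZMod 2) = e) :
      a i * (p ^ (-((a i).valuation / 2))) ^ 2 = p ^ (e.val : ℤ) * (u i : ℤ_[p]) := by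
    conv_lhs => rw [hu i]
    rw [mul_right_comm, ← hu i, hpow, ← hi, ZMod.val_intCast, Nat.cast_ofNat]
  refine .of_comp (f := fun i : {i // ((a i).valuation : ZMod 2) = e} => i.1)
    Subtype.val_injective (.of_mul_sq (q := fun i => (p : ℚ_[p]) ^ (-((a i.1).valuation / 2)))
      (fun i => zpow_ne_zero _ hp0) ?_)
  convert hunits.smul ((p : ℚ_[p]) ^ (e.val : ℤ)) using 1
  exact funext fun i => hscaled i.1 i.2

theorem exists_residue_of_even_valuation (hp : p ≠ 2) {t : ℚ_[p]} (ht : t ≠ 0)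
    (hval : Even t.valuation) :
    ∃ r : ℕ, r.Coprime p ∧ ∀ w : ℤ, (w : ZMod p) = r → IsSquare (w * t) := by
  have hp0 : (p : ℚ_[p]) ≠ 0 := by simp [(Fact.out : p.Prime).ne_zero]
  obtain ⟨u, hu⟩ := exists_eq_zpow_valuation_mul_unit ht
  refine ⟨(toZMod (u : ℤ_[p])).val, ?_, fun w hw => ?_⟩
  · rw [← ZMod.isUnit_iff_coprime, ZMod.natCast_zmod_val]
    exact u.isUnit.map toZMod
  · rw [ZMod.natCast_zmod_val] at hw
    have hmap : toZMod ((w : ℤ_[p]) * (u : ℤ_[p])) = toZMod (u : ℤ_[p]) * toZMod (u : ℤ_[p]) := by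
      rw [map_mul, map_intCast, hw]
    have hunit : IsUnit ((w : ℤ_[p]) * (u : ℤ_[p])) := isUnit_iff_toZMod_ne_zero.2 <| by
      rw [hmap]
      exact mul_self_ne_zero.2 (isUnit_iff_toZMod_ne_zero.1 u.isUnit)
    have hsq := (isSquare_of_isSquare_toZMod hp hunit ⟨_, hmap⟩).map (Coe.ringHom (p := p))
    have hwt : w * t = Coe.ringHom (p := p) (w * (u : ℤ_[p])) * p ^ t.valuation := by
      conv_lhs => rw [hu]
      rw [map_mul, map_intCast]
      exact (mul_left_comm _ _ _).trans (mul_comm _ _)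
    rw [hwt]
    obtain ⟨k, hk⟩ := hval
    exact hsq.mul ⟨p ^ k, by rw [hk, zpow_add₀ hp0]⟩

theorem DiagonalIsotropic.exists_primitive {a : ι → ℤ_[p]}
    (h : DiagonalIsotropic fun i => (a i : ℚ_[p])) :
    ∃ y : ι → ℤ_[p], ∑ i, a i * y i ^ 2 = 0 ∧ ∃ i, y i = 1 := by
  obtain ⟨x, hx, hsum⟩ := h
  obtain ⟨j, hj⟩ := Function.ne_iff.1 hx
  have : Nonempty ι := ⟨j⟩
  obtain ⟨i, hi⟩ := Finite.exists_max fun i => ‖x i‖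
  have hxi : x i ≠ 0 := norm_pos_iff.1 ((norm_pos_iff.2 hj).trans_le (hi j))
  have hle (k : ι) : ‖x k / x i‖ ≤ 1 := by
    rw [norm_div]
    exact div_le_one_of_le₀ (hi k) (norm_nonneg _)
  obtain ⟨y, hy⟩ : ∃ y : ι → ℤ_[p], ∀ k, (y k : ℚ_[p]) = x k / x i :=
    ⟨fun k => ⟨_, hle k⟩, fun _ => rfl⟩
  refine ⟨y, PadicInt.ext ?_, i, PadicInt.ext (by simp [hy, hxi])⟩
  push_cast
  simpa [hy, div_pow, mul_div_assoc', ← Finset.sum_div, hxi] using hsum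

theorem isSquare_neg_toZMod_of_diagonalIsotropic {a b : ℤ_[p]} (hb : IsUnit b)
    (h : DiagonalIsotropic ![(1 : ℚ_[p]), a, p * b]) : IsSquare (-toZMod a) := by
  obtain ⟨v, hv, i, hi⟩ := DiagonalIsotropic.exists_primitive (a := ![1, a, p * b])
    (by convert h using 1; ext i; fin_cases i <;> simp)
  simp only [Fin.sum_univ_three, cons_val, one_mul] at hv
  have hmod : toZMod (v 0) ^ 2 + toZMod a * toZMod (v 1) ^ 2 = 0 := by
    simpa using congrArg toZMod hv
  by_cases h1 : toZMod (v 1) = 0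
  -- here `p` divides `v 0` and `v 1`, so `p ^ 2 ∣ p * b * v 2 ^ 2` and `p` divides `v 2` as well
  · exfalso
    have h0 : toZMod (v 0) = 0 := by simpa [h1] using hmod
    have h2 : toZMod (v 2) = 0 := by
      rw [← not_ne_iff, ← isUnit_iff_toZMod_ne_zero, not_isUnit_iff, norm_lt_one_iff_dvd] at h0 h1
      obtain ⟨x, hx⟩ := h0
      obtain ⟨y, hy⟩ := h1
      have hbz : b * v 2 ^ 2 = p * -(x ^ 2 + a * y ^ 2) := by
        apply mul_left_cancel₀ (by simp [(Fact.out : p.Prime).ne_zero] : (p : ℤ_[p]) ≠ 0)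
        rw [hx, hy] at hv
        linear_combination hv
      simpa [isUnit_iff_toZMod_ne_zero.1 hb] using congrArg toZMod hbz
    have hall : toZMod (v i) = 0 := by fin_cases i <;> assumption
    simp [hi] at hall
  · exact ⟨toZMod (v 0) / toZMod (v 1), by field_simp; linear_combination -hmod⟩

end Padic

/-- Isotropy of the integral form with coefficients `a` over `ℝ` and over `ℚ_[p]` for all primes
`p` outside the exceptional set `S`. -/
def LocallyIsotropicOutside {ι : Type*} [Fintype ι] (S : Set ℕ) (a : ι → ℤ) : Prop :=
  DiagonalIsotropic ((↑) ∘ a : ι → ℝ) ∧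
    ∀ (p : ℕ) [Fact p.Prime], p ∉ S → DiagonalIsotropic ((↑) ∘ a : ι → ℚ_[p])

theorem LocallyIsotropicOutside.map {ι κ : Type*} [Fintype ι] [Fintype κ] {S : Set ℕ}
    {a : ι → ℤ} {b : κ → ℤ} (h : LocallyIsotropicOutside S a)
    (H : ∀ (K : Type) [Field K] [CharZero K],
      DiagonalIsotropic ((↑) ∘ a : ι → K) → DiagonalIsotropic ((↑) ∘ b : κ → K)) :
    LocallyIsotropicOutside S b :=
  ⟨H ℝ h.1, fun p _ hp => H ℚ_[p] (h.2 p hp)⟩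

section Legendre

theorem isSquare_intCast_zmod_of_squarefree {a : ℤ} {n : ℕ} (hn : Squarefree n)
    (h : ∀ p, p.Prime → p ∣ n → IsSquare (a : ZMod p)) : IsSquare (a : ZMod n) := by
  induction n using induction_on_primes with
  | zero => exact absurd hn not_squarefree_zero
  | one => exact ⟨0, Subsingleton.elim _ _⟩
  | prime_mul p n hp ih =>
    have hcop : p.Coprime n := Nat.coprime_of_squarefree_mul hn
    obtain ⟨r, hr⟩ := h p hp (dvd_mul_right p n)
    obtain ⟨s, hs⟩ := ih (hn.squarefree_of_dvd (dvd_mul_left n p))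
      fun q hq hqn => h q hq (hqn.mul_left p)
    have hrs : IsSquare (a : ZMod p × ZMod n) := ⟨(r, s), Prod.ext hr hs⟩
    simpa using hrs.map (ZMod.chineseRemainder hcop).symm

theorem LocallyIsotropicOutside.isSquare_neg {a b : ℤ} (hb : Squarefree b)
    (h : LocallyIsotropicOutside {2} ![1, a, b]) : IsSquare ((-a : ℤ) : ZMod b.natAbs) := by
  refine isSquare_intCast_zmod_of_squarefree (Int.squarefree_natAbs.2 hb) fun p hp hpb => ?_
  have := Fact.mk hp
  by_cases hp2 : p = 2
  · subst hp2
    generalize ((-a : ℤ) : ZMod 2) = r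
    decide +revert
  obtain ⟨m, rfl⟩ := Int.natCast_dvd.2 hpb
  have hm : IsUnit (m : ℤ_[p]) := by
    rw [isUnit_intCast_padicInt_iff]
    rintro ⟨k, rfl⟩
    exact (Nat.prime_iff_prime_int.1 hp).not_isUnit (hb p ⟨k, by ring⟩)
  have := isSquare_neg_toZMod_of_diagonalIsotropic (a := a) hm
    (by simpa [comp_vecCons, comp_vecEmpty] using h.2 p hp2)
  simpa using this

theorem exists_sq_add_eq_mul_natAbs_lt {a b : ℤ} (hb : 2 ≤ b.natAbs) (hab : a.natAbs ≤ b.natAbs)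
    (h : IsSquare ((-a : ℤ) : ZMod b.natAbs)) :
    ∃ t b', t ^ 2 + a = b * b' ∧ b'.natAbs < b.natAbs := by
  obtain ⟨r, hr⟩ := h
  have : NeZero b.natAbs := ⟨by omega⟩
  have hr_le : 2 * r.valMinAbs.natAbs ≤ b.natAbs := by
    have := ZMod.natAbs_valMinAbs_le r
    omega
  obtain ⟨b', hb'⟩ : b ∣ r.valMinAbs ^ 2 + a := by
    rw [← Int.natAbs_dvd, ← ZMod.intCast_zmod_eq_zero_iff_dvd]
    push_cast at hr ⊢
    linear_combination -hr
  refine ⟨r.valMinAbs, b', hb', ?_⟩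
  have hle : b.natAbs * b'.natAbs ≤ r.valMinAbs.natAbs ^ 2 + a.natAbs := by
    rw [← Int.natAbs_mul, ← hb', ← Int.natAbs_pow]
    exact Int.natAbs_add_le _ _
  by_contra! hlt
  nlinarith [Nat.mul_le_mul hr_le hr_le, Nat.mul_le_mul_left b.natAbs hlt,
    Nat.mul_le_mul_right b.natAbs hb]

theorem exists_eq_sq_mul_natAbs_lt {b : ℤ} (hb : b ≠ 0) (h : ¬Squarefree b) :
    ∃ x s, x ≠ 0 ∧ b = x ^ 2 * s ∧ s.natAbs < b.natAbs := by
  obtain ⟨x, ⟨s, rfl⟩, hx⟩ : ∃ x : ℤ, x * x ∣ b ∧ ¬IsUnit x := by simpa [Squarefree] using h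
  have hs : 0 < s.natAbs := Int.natAbs_pos.2 (right_ne_zero_of_mul hb)
  have hx0 : x ≠ 0 := left_ne_zero_of_mul (left_ne_zero_of_mul hb)
  have hx2 : 2 ≤ x.natAbs := by
    rw [Int.isUnit_iff_natAbs_eq] at hx
    omega
  refine ⟨x, s, hx0, by ring, ?_⟩
  rw [Int.natAbs_mul, Int.natAbs_mul]
  nlinarith [Nat.mul_le_mul hx2 hx2]

theorem LocallyIsotropicOutside.exists_natAbs_lt {a b : ℤ} (hb : 2 ≤ b.natAbs)
    (hab : a.natAbs ≤ b.natAbs) (h : LocallyIsotropicOutside {2} ![1, a, b]) :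
    ∃ b' : ℤ, b'.natAbs < b.natAbs ∧ ∀ (K : Type) [Field K] [CharZero K],
      DiagonalIsotropic ![(1 : K), a, b] ↔ DiagonalIsotropic ![(1 : K), a, b'] := by
  by_cases hsf : Squarefree b
  · obtain ⟨t, b', ht, hlt⟩ := exists_sq_add_eq_mul_natAbs_lt hb hab (h.isSquare_neg hsf)
    refine ⟨b', hlt, fun K _ _ => ?_⟩
    have htK : (t : K) ^ 2 + a = b * b' := by exact_mod_cast ht
    exact ⟨.of_sq_add_eq_mul htK, .of_sq_add_eq_mul (htK.trans (mul_comm _ _))⟩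
  · obtain ⟨x, s, hx, rfl, hlt⟩ := exists_eq_sq_mul_natAbs_lt (by omega) hsf
    refine ⟨s, hlt, fun K _ _ => ?_⟩
    have hxK : (x : K) ≠ 0 := by exact_mod_cast hx
    simpa using diagonalIsotropic_one_mul_sq_iff hxK

theorem diagonalIsotropic_of_natAbs_le_one {a b : ℤ} (ha : a.natAbs ≤ 1) (hb : b.natAbs ≤ 1)
    (h : DiagonalIsotropic ![(1 : ℝ), a, b]) : DiagonalIsotropic ![(1 : ℚ), a, b] := by
  rw [diagonalIsotropic_three_iff] at h ⊢
  obtain rfl | rfl | ha1 : a = 0 ∨ a = -1 ∨ a = 1 := by omega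
  · exact ⟨0, 1, 0, by simp⟩
  · exact ⟨1, 1, 0, by simp⟩
  obtain rfl | rfl | hb1 : b = 0 ∨ b = -1 ∨ b = 1 := by omega
  · exact ⟨0, 0, 1, by simp⟩
  · exact ⟨1, 0, 1, by simp⟩
  obtain ⟨x, y, z, hne, hsum⟩ := h
  have hpos : 0 < x ^ 2 + y ^ 2 + z ^ 2 := by
    rcases hne with h | h | h <;> positivity
  rw [ha1, hb1] at hsum
  push_cast at hsum
  linarith

theorem LocallyIsotropicOutside.diagonalIsotropic_one {a b : ℤ}
    (h : LocallyIsotropicOutside {2} ![1, a, b]) : DiagonalIsotropic ![(1 : ℚ), a, b] := by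
  induction hN : a.natAbs + b.natAbs using Nat.strong_induction_on generalizing a b with
  | _ N ih =>
  wlog hab : a.natAbs ≤ b.natAbs generalizing a b
  · refine (this (h.map fun K _ _ hK => ?_) (by omega) (by omega)).swap
    simpa [comp_vecCons, comp_vecEmpty] using
      (show DiagonalIsotropic ![(1 : K), a, b] by
        simpa [comp_vecCons, comp_vecEmpty] using hK).swap
  by_cases hb : b.natAbs ≤ 1
  · exact diagonalIsotropic_of_natAbs_le_one (by omega) hb
      (by simpa [comp_vecCons, comp_vecEmpty] using h.1)
  obtain ⟨b', hlt, hiff⟩ := h.exists_natAbs_lt (by omega) hab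
  refine (hiff ℚ).2 (ih _ (by omega) (h.map fun K _ _ hK => ?_) rfl)
  simpa [comp_vecCons, comp_vecEmpty, hiff K] using hK

/-- Legendre's theorem. The descent uses a prime `p` only to make `-a` a square modulo `p`, which
is automatic for `p = 2`. -/
theorem LocallyIsotropicOutside.diagonalIsotropic_ternary {a b c : ℤ}
    (h : LocallyIsotropicOutside {2} ![a, b, c]) : DiagonalIsotropic ![(a : ℚ), b, c] := by
  by_cases ha : a = 0
  · exact diagonalIsotropic_three_iff.2 ⟨1, 0, 0, by simp [ha]⟩
  have haK (K : Type) [Field K] [CharZero K] : (a : K) ≠ 0 := by exact_mod_cast ha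
  rw [← diagonalIsotropic_one_mul_mul_iff (haK ℚ)]
  have hone : LocallyIsotropicOutside {2} ![1, a * b, a * c] := h.map fun K _ _ hK => by
    simpa [comp_vecCons, comp_vecEmpty, diagonalIsotropic_one_mul_mul_iff (haK K)] using hK
  simpa using hone.diagonalIsotropic_one

end Legendre

section Dirichlet

theorem jacobiSym_eq_mul_jacobiSym_natAbs {k : ℤ} {m : ℕ} (hk : Odd k) (hm : Odd m) :
    J(k | m) = (if k % 4 = 1 then 1 else ZMod.χ₄ m) * J(m | k.natAbs) := by
  have hk2 : k % 2 = 1 := Int.odd_iff.1 hk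
  have hm2 : m % 2 = 1 := Nat.odd_iff.1 hm
  have hχ : ZMod.χ₄ (m : ZMod 4) = if m % 4 = 1 then 1 else -1 := by
    rw [ZMod.χ₄_nat_eq_if_mod_four, hm2, if_neg one_ne_zero]
  have hrec := jacobiSym.quadratic_reciprocity_if (Nat.odd_iff.1 (Int.natAbs_odd.2 hk)) hm2
  rcases le_total 0 k with h0 | h0
  · have hnonneg : J(k | m) = J((k.natAbs : ℤ) | m) := by rw [Int.natAbs_of_nonneg h0]
    rw [hnonneg, ← hrec, hχ]
    split_ifs <;> omega
  · have hnonpos : J(k | m) = ZMod.χ₄ m * J((k.natAbs : ℤ) | m) := by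
      rw [← jacobiSym.neg _ hm, Int.ofNat_natAbs_of_nonpos h0, neg_neg]
    rw [hnonpos, ← hrec, hχ]
    split_ifs <;> omega

theorem exists_odd_χ₄_χ₈_eq {e f : ℤ} (he : e = 1 ∨ e = -1) (hf : f = 1 ∨ f = -1) :
    ∃ r : ℕ, Odd r ∧ ZMod.χ₄ r = e ∧ ZMod.χ₈ r = f := by
  rcases he with rfl | rfl <;> rcases hf with rfl | rfl
  · exact ⟨1, by decide⟩
  · exact ⟨5, by decide⟩
  · exact ⟨7, by decide⟩
  · exact ⟨3, by decide⟩

theorem exists_prime_gt_modEq_eight_modEq {n c r : ℕ} (hn : Odd n) (hc : c.Coprime n)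
    (hr : Odd r) : ∃ l > n, l.Prime ∧ l ≡ r [MOD 8] ∧ l ≡ c [MOD n] := by
  have h8 {m : ℕ} (hm : Odd m) : m.Coprime 8 := (Nat.coprime_two_right.2 hm).pow_right 3
  obtain ⟨x, hxr, hxc⟩ := Nat.chineseRemainder (h8 hn).symm r c
  have hx : x.Coprime (8 * n) :=
    Nat.Coprime.mul_right (hxr.gcd_eq.trans (h8 hr)) (hxc.gcd_eq.trans hc)
  obtain ⟨l, hln, hl, hlx⟩ := Nat.forall_exists_prime_gt_and_modEq n
    (mul_ne_zero (by norm_num) hn.pos.ne') hx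
  exact ⟨l, hln, hl, (hlx.of_mul_right n).trans hxr, (hlx.of_mul_left 8).trans hxc⟩

-- By reciprocity the residue of `l` modulo `n` fixes the two symbols up to factors depending on
-- `l` modulo `8`, and these factors take all four pairs of signs.
theorem exists_prime_modEq_jacobiSym_eq_one {n c : ℕ} (hn : Odd n) (hc : c.Coprime n) {k₁ k₂ : ℤ}
    (hk₁ : k₁ % 4 = 3) (hk₁n : k₁ ∣ n) (hk₂ : Odd k₂) (hk₂n : k₂ ∣ n) :
    ∃ l > n, l.Prime ∧ Odd l ∧ l ≡ c [MOD n] ∧ J(k₁ | l) = 1 ∧ J(2 * k₂ | l) = 1 := by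
  have hsign {k : ℤ} (hk : k ∣ n) : J(c | k.natAbs) = 1 ∨ J(c | k.natAbs) = -1 := by
    refine jacobiSym.eq_one_or_neg_one ?_
    rw [Int.gcd_natCast_natCast]
    exact hc.coprime_dvd_right (Int.natAbs_dvd_natAbs.2 hk)
  set e := J(c | k₁.natAbs) with he
  set f := (if k₂ % 4 = 1 then 1 else e) * J(c | k₂.natAbs) with hf
  have he' : e = 1 ∨ e = -1 := hsign hk₁n
  have hf' : f = 1 ∨ f = -1 := by
    rcases he' with he | he <;> rcases hsign hk₂n with h | h <;> rw [hf, he, h] <;>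
      split_ifs <;> norm_num
  obtain ⟨r, hr, hr₄, hr₈⟩ := exists_odd_χ₄_χ₈_eq he' hf'
  obtain ⟨l, hln, hl, hlr, hlc⟩ := exists_prime_gt_modEq_eight_modEq hn hc hr
  have hl₂ : l ≡ r [MOD 2] := hlr.of_dvd (by norm_num)
  have hl₄ : ZMod.χ₄ l = e := by
    rw [(ZMod.natCast_eq_natCast_iff l r 4).2 (hlr.of_dvd (by norm_num)), hr₄]
  have hl₈ : ZMod.χ₈ l = f := by rw [(ZMod.natCast_eq_natCast_iff l r 8).2 hlr, hr₈]
  have hodd : Odd l := Nat.odd_iff.2 (Eq.trans hl₂ (Nat.odd_iff.1 hr))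
  have hJ {k : ℤ} (hk : k ∣ n) : J(l | k.natAbs) = J(c | k.natAbs) :=
    jacobiSym.mod_left' (Int.natCast_modEq_iff.2 (hlc.of_dvd (Int.natAbs_dvd_natAbs.2 hk)))
  refine ⟨l, hln, hl, hodd, hlc, ?_, ?_⟩
  · rw [jacobiSym_eq_mul_jacobiSym_natAbs (Int.odd_iff.2 (by omega)) hodd, if_neg (by omega),
      hl₄, hJ hk₁n, ← he]
    rcases he' with h | h <;> simp [h]
  · rw [jacobiSym.mul_left, jacobiSym.at_two hodd, hl₈,
      jacobiSym_eq_mul_jacobiSym_natAbs hk₂ hodd, hl₄, hJ hk₂n, ← hf]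
    rcases hf' with h | h <;> simp [h]

theorem exists_coprime_forall_modEq {n : ℕ} (hn : n ≠ 0) {R : ℕ → ℕ} (hR : ∀ p, (R p).Coprime p) :
    ∃ c : ℕ, c.Coprime n ∧ ∀ p ∈ n.primeFactors, c ≡ R p [MOD p] := by
  obtain ⟨c, hc⟩ := Nat.chineseRemainderOfFinset R id n.primeFactors
    (fun p hp => (Nat.prime_of_mem_primeFactors hp).ne_zero)
    fun p hp q hq hpq => (Nat.coprime_primes (Nat.prime_of_mem_primeFactors hp)
      (Nat.prime_of_mem_primeFactors hq)).2 hpq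
  refine ⟨c, Nat.coprime_of_dvd fun p hp hpc hpn => ?_, hc⟩
  have hcop : c.Coprime p := (hc p (Nat.mem_primeFactors.2 ⟨hp, hpn, hn⟩)).gcd_eq.trans (hR p)
  exact hp.one_lt.ne' (hcop.symm.eq_one_of_dvd hpc)

theorem exists_factorization_eq (n : ℕ) (e : ℕ → ℕ) :
    ∃ m : ℕ, m ≠ 0 ∧ m.primeFactors ⊆ n.primeFactors ∧
      ∀ p ∈ n.primeFactors, m.factorization p = e p := by
  set f : ℕ →₀ ℕ := Finsupp.indicator n.primeFactors fun p _ => e p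
  have hf : ∀ p ∈ f.support, p.Prime := fun p hp =>
    Nat.prime_of_mem_primeFactors (Finsupp.support_indicator_subset _ _ hp)
  have hm := Nat.prod_pow_factorization_eq_self hf
  refine ⟨f.prod (· ^ ·), Finset.prod_ne_zero_iff.2 fun p hp => pow_ne_zero _ (hf p hp).ne_zero,
    ?_, fun p hp => ?_⟩
  · rw [← Nat.support_factorization, hm]
    exact Finsupp.support_indicator_subset _ _
  · rw [hm, Finsupp.indicator_of_mem hp]

end Dirichlet

section CommonValue

theorem not_dvd_of_dvd_two {p : ℕ} (hp : p.Prime) (hp2 : p ≠ 2) {σ : ℤ} (hσ : σ ∣ 2) :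
    ¬(p : ℤ) ∣ σ := fun h =>
  hp2 <| (Nat.prime_dvd_prime_iff_eq hp Nat.prime_two).1 (by exact_mod_cast h.trans hσ)

theorem exists_residue_of_valuation {p : ℕ} [Fact p.Prime] (hp : p ≠ 2) {σ : ℤ} (hσ : σ ∣ 2)
    {m : ℕ} (hm : m ≠ 0) {T : ℚ_[p]} (hT : T ≠ 0)
    (hval : m.factorization p = T.valuation.natAbs) :
    ∃ r : ℕ, r.Coprime p ∧
      ∀ l : ℕ, l ≡ r [MOD p] → IsSquare (((σ * (m * l : ℕ) : ℤ) : ℚ_[p]) * T) := by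
  have hσp : ¬(p : ℤ) ∣ σ := not_dvd_of_dvd_two Fact.out hp hσ
  have hσ0 : (σ : ℚ_[p]) ≠ 0 := by
    rintro h
    exact hσp (by simp [Int.cast_eq_zero.1 h])
  have hm0 : (m : ℚ_[p]) ≠ 0 := by exact_mod_cast hm
  have heven : Even (σ * m * T : ℚ_[p]).valuation := by
    rw [Padic.valuation_mul (mul_ne_zero hσ0 hm0) hT, Padic.valuation_mul hσ0 hm0,
      Padic.valuation_intCast, Padic.valuation_natCast, padicValInt.eq_zero_of_not_dvd hσp,
      ← Nat.factorization_def m Fact.out, hval]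
    grind
  obtain ⟨r, hr, hsq⟩ :=
    exists_residue_of_even_valuation hp (mul_ne_zero (mul_ne_zero hσ0 hm0) hT) heven
  refine ⟨r, hr, fun l hl => ?_⟩
  convert hsq l (by exact_mod_cast (ZMod.natCast_eq_natCast_iff l r p).2 hl) using 1
  push_cast
  ring

theorem exists_prime_isSquare_mul_padic {n : ℕ} (hn : Odd n)
    {T : ∀ (p : ℕ) [Fact p.Prime], p ≠ 2 → ℚ_[p]}
    (hT : ∀ (p : ℕ) [Fact p.Prime] (hp : p ≠ 2), T p hp ≠ 0) {σ : ℤ} (hσ : σ ∣ 2) {k₁ k₂ : ℤ}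
    (hk₁ : k₁ % 4 = 3) (hk₁n : k₁ ∣ n) (hk₂ : Odd k₂) (hk₂n : k₂ ∣ n) :
    ∃ l m : ℕ, l.Prime ∧ l ≠ 2 ∧ n < l ∧ Odd m ∧ (∀ p : ℕ, p.Prime → p ≠ l → p ∣ m → p ∣ n) ∧
      (∀ (p : ℕ) [Fact p.Prime] (hp : p ≠ 2), p ∣ n →
        IsSquare (((σ * m : ℤ) : ℚ_[p]) * T p hp)) ∧
      J(k₁ | l) = 1 ∧ J(2 * k₂ | l) = 1 := by
  classical
  obtain ⟨m, hm, hmn, hval⟩ := exists_factorization_eq n fun p =>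
    if h : p.Prime ∧ p ≠ 2 then have := Fact.mk h.1; (T p h.2).valuation.natAbs else 0
  have hres (p : ℕ) : ∃ r : ℕ, r.Coprime p ∧ ∀ [Fact p.Prime] (hp : p ≠ 2), p ∣ n →
      ∀ l : ℕ, l ≡ r [MOD p] → IsSquare (((σ * (m * l : ℕ) : ℤ) : ℚ_[p]) * T p hp) := by
    by_cases h : p.Prime ∧ p ≠ 2 ∧ p ∣ n
    · obtain ⟨hp, hp2, hpn⟩ := h
      have := Fact.mk hp
      have hvalp := hval p (Nat.mem_primeFactors.2 ⟨hp, hpn, hn.pos.ne'⟩)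
      obtain ⟨r, hr, hsq⟩ := exists_residue_of_valuation hp2 hσ hm (hT p hp2)
        (by simpa [hp, hp2] using hvalp)
      exact ⟨r, hr, fun _ _ => hsq⟩
    · exact ⟨1, Nat.coprime_one_left p, fun hp2 hpn => absurd ⟨Fact.out, hp2, hpn⟩ h⟩
  choose R hR hsq using hres
  obtain ⟨c, hc, hcR⟩ := exists_coprime_forall_modEq hn.pos.ne' hR
  obtain ⟨l, hnl, hl, hl_odd, hlc, hJ⟩ :=
    exists_prime_modEq_jacobiSym_eq_one hn hc hk₁ hk₁n hk₂ hk₂n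
  have hdvd {p : ℕ} (hp : p.Prime) (hpm : p ∣ m) : p ∣ n :=
    Nat.dvd_of_mem_primeFactors (hmn (Nat.mem_primeFactors.2 ⟨hp, hpm, hm⟩))
  have hm_odd : Odd m := Nat.not_even_iff_odd.1 fun hm2 =>
    Nat.not_even_iff_odd.2 hn (even_iff_two_dvd.2 (hdvd Nat.prime_two hm2.two_dvd))
  refine ⟨l, m * l, hl, hl_odd.ne_two_of_dvd_nat dvd_rfl, hnl, hm_odd.mul hl_odd,
    fun p hp hpl hpml => ?_, fun p hp hp2 hpn => ?_, hJ⟩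
  · refine hdvd hp ((hp.dvd_mul.1 hpml).resolve_right fun h => hpl ?_)
    exact (Nat.prime_dvd_prime_iff_eq hp hl).1 h
  · exact hsq p hp2 hpn l <|
      (hlc.of_dvd hpn).trans (hcR p (Nat.mem_primeFactors.2 ⟨hp.out, hpn, hn.pos.ne'⟩))

theorem exists_odd_nat_dvd_iff {P : ℤ} (hP : P ≠ 0) :
    ∃ n : ℕ, Odd n ∧ ∀ k : ℤ, Odd k → (k ∣ n ↔ k ∣ P) := by
  obtain ⟨j, n, hn, hPn⟩ := Nat.exists_eq_two_pow_mul_odd (Int.natAbs_ne_zero.2 hP)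
  refine ⟨n, hn, fun k hk => ?_⟩
  have hcop : k.natAbs.Coprime (2 ^ j) :=
    (Nat.coprime_two_right.2 (Int.natAbs_odd.2 hk)).pow_right j
  rw [← Int.natAbs_dvd_natAbs, ← Int.natAbs_dvd_natAbs, hPn, Int.natAbs_natCast,
    hcop.dvd_mul_left]

theorem exists_prime_not_dvd_or_isSquare_mul_padic {P : ℤ} (hP : P ≠ 0)
    {T : ∀ (p : ℕ) [Fact p.Prime], p ≠ 2 → ℚ_[p]}
    (hT : ∀ (p : ℕ) [Fact p.Prime] (hp : p ≠ 2), T p hp ≠ 0) {σ : ℤ} (hσ : σ ∣ 2) {k₁ k₂ : ℤ}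
    (hk₁ : k₁ % 4 = 3) (hk₁P : k₁ ∣ P) (hk₂ : Odd k₂) (hk₂P : k₂ ∣ P) :
    ∃ l m : ℕ, l.Prime ∧ l ≠ 2 ∧ ¬(l : ℤ) ∣ P ∧ Odd m ∧
      (∀ (p : ℕ) [Fact p.Prime] (hp : p ≠ 2), p ≠ l →
        (¬(p : ℤ) ∣ σ * m ∧ ¬(p : ℤ) ∣ P) ∨ IsSquare (((σ * m : ℤ) : ℚ_[p]) * T p hp)) ∧
      J(k₁ | l) = 1 ∧ J(2 * k₂ | l) = 1 := by
  obtain ⟨n, hn, hdvd⟩ := exists_odd_nat_dvd_iff hP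
  have hprime_dvd {p : ℕ} (hp : p.Prime) (hp2 : p ≠ 2) : p ∣ n ↔ (p : ℤ) ∣ P := by
    rw [← hdvd p (by exact_mod_cast hp.odd_of_ne_two hp2), Int.natCast_dvd_natCast]
  obtain ⟨l, m, hl, hl2, hnl, hm, hmn, hsq, hJ⟩ := exists_prime_isSquare_mul_padic hn hT hσ hk₁
    ((hdvd k₁ (Int.odd_iff.2 (by omega))).2 hk₁P) hk₂ ((hdvd k₂ hk₂).2 hk₂P)
  refine ⟨l, m, hl, hl2, fun hlP => ?_, hm, fun p hp hp2 hpl => ?_, hJ⟩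
  · exact Nat.not_dvd_of_pos_of_lt hn.pos hnl ((hprime_dvd hl hl2).2 hlP)
  · by_cases hpn : p ∣ n
    · exact .inr (hsq p hp2 hpn)
    · refine .inl ⟨fun hpt => ?_, fun hpP => hpn ((hprime_dvd Fact.out hp2).2 hpP)⟩
      have hpm : p ∣ m := by
        exact_mod_cast (Int.Prime.dvd_mul' hp.out hpt).resolve_left
          (not_dvd_of_dvd_two hp.out hp2 hσ)
      exact hpn (hmn p hp.out hpl hpm)

theorem locallyIsotropicOutside_vecCons {m : ℕ} [m.AtLeastTwo] {v : Fin m → ℤ} {t : ℤ} {l : ℕ}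
    (ht : t ≠ 0)
    (hreal : ∃ s : ℝ, 0 < s * t ∧ DiagonalIsotropic (vecCons s ((↑) ∘ v)))
    (hpadic : ∀ (p : ℕ) [Fact p.Prime], p ≠ 2 → p ≠ l → (¬(p : ℤ) ∣ t ∧ ∀ i, ¬(p : ℤ) ∣ v i) ∨
      ∃ s : ℚ_[p], s ≠ 0 ∧ IsSquare (s * t) ∧ DiagonalIsotropic (vecCons s ((↑) ∘ v))) :
    LocallyIsotropicOutside {2, l} (vecCons t v) := by
  refine ⟨?_, fun p _ hpl => ?_⟩
  · obtain ⟨s, hst, hs⟩ := hreal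
    rw [comp_vecCons]
    exact hs.vecCons_of_isSquare_mul (left_ne_zero_of_mul hst.ne') (by exact_mod_cast ht)
      (Real.isSquare_iff.2 hst.le)
  · simp only [Set.mem_insert_iff, Set.mem_singleton_iff, not_or] at hpl
    rcases hpadic p hpl.1 hpl.2 with ⟨hpt, hpv⟩ | ⟨s, hs, hst, hiso⟩
    · refine diagonalIsotropic_padic_of_not_dvd hpl.1 ?_ (Fin.cases hpt hpv)
      have := Nat.AtLeastTwo.prop (n := m)
      simpa
    · rw [comp_vecCons]
      exact hiso.vecCons_of_isSquare_mul hs (by exact_mod_cast ht) hst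

theorem mul_emod_four_eq_two {x y : ℤ} (hx : x % 4 = 2) (hy : Odd y) : x * y % 4 = 2 := by
  rw [Int.odd_iff] at hy
  rcases (by omega : y % 4 = 1 ∨ y % 4 = 3) with h | h <;> simp [Int.mul_emod, hx, h]

theorem exists_dvd_two_mul_pos_mul_emod_four {c : ℤ} (hc : ¬4 ∣ c) {x : ℝ} (hx : x ≠ 0) :
    ∃ σ : ℤ, σ ∣ 2 ∧ 0 < σ * x ∧ (c * σ) % 4 = 2 := by
  obtain ⟨ε, hε, hεx⟩ : ∃ ε : ℤ, (ε = 1 ∨ ε = -1) ∧ 0 < ε * x := by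
    rcases lt_or_gt_of_ne hx with h | h
    · exact ⟨-1, by simp, by push_cast; linarith⟩
    · exact ⟨1, by simp, by simpa⟩
  rcases Int.even_or_odd' c with ⟨d, rfl | rfl⟩
  · exact ⟨ε, by rcases hε with rfl | rfl <;> norm_num, hεx, by rcases hε with rfl | rfl <;> omega⟩
  · exact ⟨2 * ε, by rcases hε with rfl | rfl <;> norm_num, by push_cast; linarith,
      by rcases hε with rfl | rfl <;> omega⟩

-- The residue of `c * t` makes the symbol of `-(t * c)` at the next auxiliary prime adjustable when
-- the form `⟨t, c, d, e⟩` is split again.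
theorem LocallyIsotropicOutside.exists_common_value {a b : ℕ} [a.AtLeastTwo] [b.AtLeastTwo]
    {v : Fin a → ℤ} {w : Fin b → ℤ} (h : LocallyIsotropicOutside {2} (Fin.append v w))
    (hvw : ∀ i, Fin.append v w i ≠ 0) {k₁ k₂ c : ℤ} (hk₁ : k₁ % 4 = 3)
    (hk₁d : k₁ ∣ ∏ i, Fin.append v w i) (hk₂ : Odd k₂) (hk₂d : k₂ ∣ ∏ i, Fin.append v w i)
    (hc : ¬4 ∣ c) :
    ∃ (l : ℕ) (t : ℤ), l.Prime ∧ l ≠ 2 ∧ (∀ i, ¬(l : ℤ) ∣ Fin.append v w i) ∧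
      t ≠ 0 ∧ (c * t) % 4 = 2 ∧ LocallyIsotropicOutside {2, l} (vecCons (-t) v) ∧
      LocallyIsotropicOutside {2, l} (vecCons t w) ∧ J(k₁ | l) = 1 ∧ J(2 * k₂ | l) = 1 := by
  have hv i : v i ≠ 0 := by simpa using hvw (Fin.castAdd b i)
  have hw j : w j ≠ 0 := by simpa using hvw (Fin.natAdd a j)
  have hcommon (K : Type) [Field K] [CharZero K]
      (hK : DiagonalIsotropic ((↑) ∘ Fin.append v w : Fin (a + b) → K)) :=
    DiagonalIsotropic.exists_common_value (v := ((↑) ∘ v : Fin a → K)) (w := (↑) ∘ w)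
      (fun i => by simpa using hv i) (fun j => by simpa using hw j) (comp_append _ v w ▸ hK)
  obtain ⟨s, hs, hsv, hsw⟩ := hcommon ℝ h.1
  choose T hT hTv hTw using fun (p : ℕ) [Fact p.Prime] (hp : p ≠ 2) => hcommon ℚ_[p] (h.2 p hp)
  obtain ⟨σ, hσ, hσs, hcσ⟩ := exists_dvd_two_mul_pos_mul_emod_four hc hs
  obtain ⟨l, m, hl, hl2, hlP, hm, hlocal, hJ⟩ := exists_prime_not_dvd_or_isSquare_mul_padic
    (Finset.prod_ne_zero_iff.2 fun i _ => hvw i) hT hσ hk₁ hk₁d hk₂ hk₂d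
  have hnd {p : ℕ} (hp : ¬(p : ℤ) ∣ ∏ i, Fin.append v w i) (i) : ¬(p : ℤ) ∣ Fin.append v w i :=
    fun h => hp (h.trans (Finset.dvd_prod_of_mem _ (Finset.mem_univ i)))
  have hm4 : (c * (σ * m)) % 4 = 2 :=
    mul_assoc c σ m ▸ mul_emod_four_eq_two hcσ (by exact_mod_cast hm)
  have ht : σ * (m : ℤ) ≠ 0 := fun h => by simp [h] at hm4
  have hst : 0 < s * (σ * m : ℤ) := by
    have : (0 : ℝ) < m := by exact_mod_cast hm.pos
    push_cast
    nlinarith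
  refine ⟨l, σ * m, hl, hl2, hnd hlP, ht, hm4,
    locallyIsotropicOutside_vecCons (neg_ne_zero.2 ht) ⟨-s, by simpa using hst, hsv⟩
      fun p _ hp hpl => (hlocal p hp hpl).imp (fun h => ⟨by simpa using h.1, fun i => ?_⟩)
        fun h => ⟨-T p hp, neg_ne_zero.2 (hT p hp), by simpa [mul_comm] using h, hTv p hp⟩,
    locallyIsotropicOutside_vecCons ht ⟨s, hst, hsw⟩
      fun p _ hp hpl => (hlocal p hp hpl).imp (fun h => ⟨h.1, fun j => ?_⟩)
        fun h => ⟨T p hp, hT p hp, by simpa [mul_comm] using h, hTw p hp⟩, hJ⟩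
  · simpa using hnd h.2 (Fin.castAdd b i)
  · simpa using hnd h.2 (Fin.natAdd a j)

end CommonValue

section IntegralForms

/-- The class of the integer `n` modulo nonzero squares contains, for `n ≠ 0`, an integer congruent
to `r` modulo `4`. Discriminants of binary forms with residue `2` or `3` are the ones that become
squares modulo a suitable auxiliary prime. -/
def SquareClassModFour (n r : ℤ) : Prop :=
  ∃ u k : ℤ, n = u ^ 2 * k ∧ k % 4 = r

theorem LocallyIsotropicOutside.of_padic {ι : Type*} [Fintype ι] {a : ι → ℤ} {l : ℕ}
    [Fact l.Prime] (h : LocallyIsotropicOutside {2, l} a)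
    (hl : DiagonalIsotropic ((↑) ∘ a : ι → ℚ_[l])) : LocallyIsotropicOutside {2} a := by
  refine ⟨h.1, fun p _ hp => ?_⟩
  by_cases hpl : p = l
  · subst hpl
    exact hl
  · exact h.2 p (by simp_all)

theorem LocallyIsotropicOutside.diagonalIsotropic_of_jacobiSym {l : ℕ} [Fact l.Prime] (hl : l ≠ 2)
    {t a b u k : ℤ} (h : LocallyIsotropicOutside {2, l} ![t, a, b]) (ha : a ≠ 0)
    (hab : -(a * b) = u ^ 2 * k) (hJ : J(k | l) = 1) :
    DiagonalIsotropic ((↑) ∘ ![t, a, b] : Fin 3 → ℚ) := by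
  have hsq : IsSquare (-((a : ℚ_[l]) * b)) := by
    have hk := isSquare_padic_of_jacobiSym_eq_one hl hJ
    have hab' : -((a : ℚ_[l]) * b) = u ^ 2 * k := by exact_mod_cast hab
    exact hab' ▸ (IsSquare.sq _).mul hk
  have hlocal : DiagonalIsotropic ((↑) ∘ ![t, a, b] : Fin 3 → ℚ_[l]) := by
    simp only [comp_vecCons, comp_vecEmpty]
    exact (diagonalIsotropic_two_of_isSquare (by exact_mod_cast ha) hsq).vecCons _
  simpa [comp_vecCons, comp_vecEmpty] using (h.of_padic hlocal).diagonalIsotropic_ternary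

theorem diagonalIsotropic_intCast_append {m n : ℕ} {v : Fin m → ℤ} {w : Fin n → ℤ} {t : ℤ}
    (ht : t ≠ 0) (hv : DiagonalIsotropic ((↑) ∘ vecCons (-t) v : Fin (m + 1) → ℚ))
    (hw : DiagonalIsotropic ((↑) ∘ vecCons t w : Fin (n + 1) → ℚ)) :
    DiagonalIsotropic ((↑) ∘ Fin.append v w : Fin (m + n) → ℚ) := by
  rw [comp_vecCons] at hv hw
  rw [comp_append]
  exact diagonalIsotropic_append_of_common_value (t := (t : ℚ)) (by exact_mod_cast ht)
    (by simpa using hv) hw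

theorem dvd_mul_of_neg_mul_eq {a b k u : ℤ} (h : -(a * b) = u ^ 2 * k) : k ∣ a * b :=
  Int.dvd_neg.1 (h ▸ dvd_mul_left k _)

theorem LocallyIsotropicOutside.diagonalIsotropic_quaternary {a b c d : ℤ}
    (h : LocallyIsotropicOutside {2} (Fin.append ![a, b] ![c, d]))
    (hne : ∀ i, Fin.append ![a, b] ![c, d] i ≠ 0)
    (hab : SquareClassModFour (-(a * b)) 2) (hcd : SquareClassModFour (-(c * d)) 3) :
    DiagonalIsotropic ((↑) ∘ Fin.append ![a, b] ![c, d] : Fin 4 → ℚ) := by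
  obtain ⟨u, k, hk, hk4⟩ := hab
  obtain ⟨k₂, rfl⟩ : 2 ∣ k := by omega
  obtain ⟨u', k₁, hk₁, hk₁4⟩ := hcd
  have hk₁d : k₁ ∣ ∏ i, Fin.append ![a, b] ![c, d] i := by
    rw [prod_append, Fin.prod_univ_two ![c, d]]
    exact (dvd_mul_of_neg_mul_eq hk₁).mul_left _
  have hk₂d : k₂ ∣ ∏ i, Fin.append ![a, b] ![c, d] i := by
    rw [prod_append, Fin.prod_univ_two ![a, b]]
    exact ((dvd_mul_left k₂ 2).trans (dvd_mul_of_neg_mul_eq hk)).mul_right _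
  obtain ⟨l, t, hl, hl2, -, ht, -, hv, hw, hJ₁, hJ₂⟩ :=
    h.exists_common_value hne (c := 1) hk₁4 hk₁d (Int.odd_iff.2 (by omega)) hk₂d (by decide)
  have := Fact.mk hl
  exact diagonalIsotropic_intCast_append ht
    (hv.diagonalIsotropic_of_jacobiSym hl2 (hne 0) hk hJ₂)
    (hw.diagonalIsotropic_of_jacobiSym hl2 (hne 2) hk₁ hJ₁)

theorem exists_odd_divisors_of_squareClassModFour {n : ℤ}
    (h : SquareClassModFour n 2 ∨ SquareClassModFour n 3) :
    ∃ u k k₁ k₂ : ℤ, n = u ^ 2 * k ∧ (k = k₁ ∨ k = 2 * k₂) ∧ k₁ % 4 = 3 ∧ Odd k₂ ∧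
      k₁ ∣ k ∧ k₂ ∣ k := by
  rcases h with ⟨u, k, hn, hk⟩ | ⟨u, k, hn, hk⟩
  · obtain ⟨k₂, rfl⟩ : 2 ∣ k := by omega
    exact ⟨u, _, -1, k₂, hn, .inr rfl, rfl, Int.odd_iff.2 (by omega), by simp, dvd_mul_left k₂ 2⟩
  · exact ⟨u, k, k, 1, hn, .inl rfl, hk, odd_one, dvd_rfl, one_dvd k⟩

theorem LocallyIsotropicOutside.diagonalIsotropic_quinary {a b c d e : ℤ}
    (h : LocallyIsotropicOutside {2} (Fin.append ![a, b] ![c, d, e]))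
    (hne : ∀ i, Fin.append ![a, b] ![c, d, e] i ≠ 0)
    (hab : SquareClassModFour (-(a * b)) 2 ∨ SquareClassModFour (-(a * b)) 3) (hc : ¬4 ∣ c)
    (hde : SquareClassModFour (-(d * e)) 3) :
    DiagonalIsotropic ((↑) ∘ Fin.append ![a, b] ![c, d, e] : Fin 5 → ℚ) := by
  obtain ⟨u, k, k₁, k₂, hk, hkk, hk₁, hk₂, hk₁k, hk₂k⟩ :=
    exists_odd_divisors_of_squareClassModFour hab
  have hkd : k ∣ ∏ i, Fin.append ![a, b] ![c, d, e] i := by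
    rw [prod_append, Fin.prod_univ_two ![a, b]]
    exact (dvd_mul_of_neg_mul_eq hk).mul_right _
  obtain ⟨l, t, hl, hl2, hld, ht, hct, hv, hw, hJ₁, hJ₂⟩ :=
    h.exists_common_value hne hk₁ (hk₁k.trans hkd) hk₂ (hk₂k.trans hkd) hc
  have := Fact.mk hl
  have hJ : J(k | l) = 1 := by rcases hkk with rfl | rfl <;> assumption
  have hlocal : DiagonalIsotropic ((↑) ∘ ![t, c, d, e] : Fin 4 → ℚ_[l]) := by
    rw [comp_vecCons]
    exact (diagonalIsotropic_padic_of_not_dvd hl2 (by simp) fun i => hld (Fin.natAdd 2 i)).vecCons _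
  have hsplit : ![t, c, d, e] = Fin.append ![t, c] ![d, e] := by
    ext i
    fin_cases i <;> rfl
  refine diagonalIsotropic_intCast_append ht
    (hv.diagonalIsotropic_of_jacobiSym hl2 (hne 0) hk hJ) ?_
  have hquaternary := hw.of_padic hlocal
  rw [hsplit] at hquaternary ⊢
  refine hquaternary.diagonalIsotropic_quaternary ?_ ⟨1, -(t * c), by ring, ?_⟩ hde
  · rw [← hsplit]
    exact Fin.cases ht fun i => by simpa using hne (Fin.natAdd 2 i)
  · rw [mul_comm]
    omega

end IntegralForms

section DyadicPairing

/-- The parity of the `2`-adic valuation and the residue modulo `4` of the odd part, for an integer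
not divisible by `4`. -/
def dyadicClass (z : ℤ) : Bool × Bool :=
  (decide (Even z), decide (z % 4 = 1 ∨ z % 8 = 2))

theorem neg_mul_emod_four_eq_three {x y : ℤ} (h : x % 4 = 1 ∧ y % 4 = 1 ∨ x % 4 = 3 ∧ y % 4 = 3) :
    -(x * y) % 4 = 3 := by
  have hxy : x * y % 4 = 1 := by
    rcases h with h | h <;> simp [Int.mul_emod, h.1, h.2]
  omega

theorem squareClassModFour_three_of_dyadicClass_eq {x y : ℤ} (hx : ¬4 ∣ x) (hy : ¬4 ∣ y)
    (h : dyadicClass x = dyadicClass y) : SquareClassModFour (-(x * y)) 3 := by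
  simp only [dyadicClass, Prod.mk.injEq, decide_eq_decide] at h
  obtain ⟨hparity, hodd⟩ := h
  rcases Int.even_or_odd' x with ⟨x', rfl | rfl⟩
  · obtain ⟨y', rfl⟩ := even_iff_two_dvd.1 (hparity.1 (even_two_mul x'))
    exact ⟨2, -(x' * y'), by ring, neg_mul_emod_four_eq_three (by omega)⟩
  · have hy_odd : ¬Even y := fun h => by grind
    rw [Int.even_iff] at hy_odd
    exact ⟨1, -((2 * x' + 1) * y), by ring, neg_mul_emod_four_eq_three (by omega)⟩

theorem squareClassModFour_two_of_even_of_odd {x y : ℤ} (hx : ¬4 ∣ x) (hx2 : Even x) (hy : Odd y) :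
    SquareClassModFour (-(x * y)) 2 := by
  refine ⟨1, -(x * y), by ring, ?_⟩
  rw [Int.even_iff] at hx2
  have hxy : x * y % 4 = 2 := mul_emod_four_eq_two (by omega) hy
  omega

theorem squareClassModFour_two_of_parity_ne {x y : ℤ} (hx : ¬4 ∣ x) (hy : ¬4 ∣ y)
    (h : (dyadicClass x).1 ≠ (dyadicClass y).1) : SquareClassModFour (-(x * y)) 2 := by
  simp only [dyadicClass, ne_eq, decide_eq_decide] at h
  rcases Int.even_or_odd x with hx2 | hx2
  · exact squareClassModFour_two_of_even_of_odd hx hx2 (Int.not_even_iff_odd.1 (by tauto))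
  · rw [← Int.not_even_iff_odd] at hx2
    rw [mul_comm]
    exact squareClassModFour_two_of_even_of_odd hy (by tauto) (Int.not_even_iff_odd.1 hx2)

theorem exists_injective_pairing (g : Fin 5 → Bool × Bool) :
    ∃ σ : Fin 5 → Fin 5, σ.Injective ∧ ((g (σ 0)).1 ≠ (g (σ 1)).1 ∨ g (σ 0) = g (σ 1)) ∧
      g (σ 3) = g (σ 4) := by
  obtain ⟨x, y, hxy, hg⟩ := Fintype.exists_ne_map_eq_of_card_lt g (by simp)
  obtain ⟨p, q, r, hpqr, hprq, hqrp⟩ : ∃ p q r : Fin 5, Function.Injective ![p, q, r, x, y] ∧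
      Function.Injective ![p, r, q, x, y] ∧ Function.Injective ![q, r, p, x, y] := by
    clear hg
    revert x y
    decide
  have hpair : ∀ u v w : Bool × Bool, (u.1 ≠ v.1 ∨ u = v) ∨ (u.1 ≠ w.1 ∨ u = w) ∨
      (v.1 ≠ w.1 ∨ v = w) := by decide
  rcases hpair (g p) (g q) (g r) with h | h | h
  · exact ⟨_, hpqr, h, hg⟩
  · exact ⟨_, hprq, h, hg⟩
  · exact ⟨_, hqrp, h, hg⟩

end DyadicPairing

section Meyer

theorem diagonalIsotropic_real_of_pos_of_neg {ι : Type*} [Fintype ι] {a : ι → ℝ} {i j : ι}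
    (hi : 0 < a i) (hj : a j < 0) : DiagonalIsotropic a := by
  have hij : Function.Injective ![i, j] := by
    have : i ≠ j := by
      rintro rfl
      exact hi.not_gt hj
    intro x y
    fin_cases x <;> fin_cases y <;> simp [this, this.symm]
  refine DiagonalIsotropic.of_comp hij ?_
  rw [comp_vecCons, comp_vecCons, comp_vecEmpty]
  exact diagonalIsotropic_two_of_isSquare hi.ne' <|
    Real.isSquare_iff.2 (neg_nonneg.2 (mul_neg_of_pos_of_neg hi hj).le)

theorem locallyIsotropicOutside_two_of_five_le_card {ι : Type*} [Fintype ι]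
    (hι : 5 ≤ Fintype.card ι) {a : ι → ℤ} (ha : ∀ i, a i ≠ 0) {i j : ι} (hi : 0 < a i)
    (hj : a j < 0) : LocallyIsotropicOutside {2} a :=
  ⟨diagonalIsotropic_real_of_pos_of_neg (i := i) (j := j) (by simpa using hi) (by simpa using hj),
    fun _ _ hp => diagonalIsotropic_padic_of_five_le_card hp hι fun i => by simpa using ha i⟩

theorem diagonalIsotropic_five_of_not_four_dvd {z : Fin 5 → ℤ} (hz : ∀ k, ¬4 ∣ z k)
    {i j : Fin 5} (hi : 0 < z i) (hj : z j < 0) :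
    DiagonalIsotropic ((↑) ∘ z : Fin 5 → ℚ) := by
  obtain ⟨σ, hσ, hab, hde⟩ := exists_injective_pairing (dyadicClass ∘ z)
  have hsplit : z ∘ σ = Fin.append ![z (σ 0), z (σ 1)] ![z (σ 2), z (σ 3), z (σ 4)] := by
    ext k
    fin_cases k <;> rfl
  obtain ⟨i', rfl⟩ := Finite.surjective_of_injective hσ i
  obtain ⟨j', rfl⟩ := Finite.surjective_of_injective hσ j
  have hne k : (z ∘ σ) k ≠ 0 := fun h => hz (σ k) (h.symm ▸ dvd_zero 4 : 4 ∣ (z ∘ σ) k)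
  have hlocal : LocallyIsotropicOutside {2} (z ∘ σ) :=
    locallyIsotropicOutside_two_of_five_le_card (by simp) hne hi hj
  refine DiagonalIsotropic.of_comp hσ ?_
  rw [Function.comp_assoc]
  rw [hsplit] at hlocal hne ⊢
  exact hlocal.diagonalIsotropic_quinary hne
    (hab.imp (squareClassModFour_two_of_parity_ne (hz _) (hz _))
      (squareClassModFour_three_of_dyadicClass_eq (hz _) (hz _)))
    (hz _) (squareClassModFour_three_of_dyadicClass_eq (hz _) (hz _) hde)

theorem exists_squarefree_mul_sq {a : ℚ} (ha : a ≠ 0) :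
    ∃ (z : ℤ) (q : ℚ), Squarefree z ∧ q ≠ 0 ∧ z = a * q ^ 2 := by
  have hden : (a.den : ℚ) ≠ 0 := by exact_mod_cast a.den_nz
  have hnd : 0 < (a.num * a.den).natAbs :=
    Int.natAbs_pos.2 (mul_ne_zero (Rat.num_ne_zero.2 ha) (by exact_mod_cast a.den_nz))
  obtain ⟨s, b, -, hb, hsb, hsq⟩ := Nat.sq_mul_squarefree_of_pos hnd
  have hb0 : (b : ℚ) ≠ 0 := by exact_mod_cast hb.ne'
  refine ⟨(a.num * a.den).sign * s, a.den / b, ?_, div_ne_zero hden hb0, ?_⟩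
  · rwa [← Int.squarefree_natAbs, Int.natAbs_mul, Int.natAbs_sign_of_ne_zero (Int.natAbs_pos.1 hnd),
      one_mul, Int.natAbs_natCast]
  · have hnum : (a.num : ℚ) * a.den = (a.num * a.den).sign * (b ^ 2 * s) := by
      have h := Int.sign_mul_natAbs (a.num * a.den)
      rw [← hsb] at h
      exact_mod_cast h.symm
    have ha : a * a.den = a.num := Rat.mul_den_eq_num a
    push_cast
    field_simp
    linear_combination -hnum - a.den * ha

theorem exists_embedding_fin_range_superset {ι : Type*} [Fintype ι] {m : ℕ} (s : Finset ι)
    (hs : s.card ≤ m) (hm : m ≤ Fintype.card ι) : ∃ f : Fin m ↪ ι, ↑s ⊆ Set.range f := by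
  obtain ⟨t, hst, ht⟩ := Finset.exists_superset_card_eq hs hm
  let e : Fin m ≃ t := (Fintype.equivFinOfCardEq (by simpa using ht)).symm
  exact ⟨e.toEmbedding.trans (.subtype _), fun i hi => ⟨e.symm ⟨i, hst hi⟩, by simp⟩⟩

end Meyer

/-- Meyer's theorem: every nondegenerate indefinite diagonal quadratic form over ℚ
of rank at least 5 is isotropic. -/
theorem meyer_indefinite_rank_five_isotropic
    (n : ℕ) (hn : 5 ≤ n) (a : Fin n → ℚ) (ha : ∀ i, a i ≠ 0)
    (i j : Fin n) (hi : 0 < a i) (hj : a j < 0) :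
    ∃ x : Fin n → ℚ, x ≠ 0 ∧ ∑ k, a k * (x k) ^ 2 = 0 := by
  choose z q hz hq hza using fun k => exists_squarefree_mul_sq (ha k)
  have hz4 k : ¬4 ∣ z k := fun h => by
    simpa [Int.isUnit_iff] using hz k 2 h
  obtain ⟨f, hf⟩ := exists_embedding_fin_range_superset {i, j}
    (Finset.card_le_two.trans (by norm_num : 2 ≤ 5)) (by simpa using hn)
  obtain ⟨i', rfl⟩ := hf (by simp : i ∈ _)
  obtain ⟨j', rfl⟩ := hf (by simp : j ∈ _)
  have hzi : (0 : ℚ) < z (f i') := hza _ ▸ mul_pos hi (sq_pos_of_ne_zero (hq _))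
  have hzj : (z (f j') : ℚ) < 0 := hza _ ▸ mul_neg_of_neg_of_pos hj (sq_pos_of_ne_zero (hq _))
  have hfive : DiagonalIsotropic ((↑) ∘ z ∘ f : Fin 5 → ℚ) :=
    diagonalIsotropic_five_of_not_four_dvd (fun k => hz4 (f k)) (Int.cast_pos.1 hzi)
      (Int.cast_lt_zero.1 hzj)
  exact DiagonalIsotropic.of_mul_sq hq <| .of_comp f.injective <| by
    simpa [Function.comp_def, hza] using hfive
end

section
/- Let n ≥ 1 and let a : Fin n → ℚ with a i ≠ 0 for every i. The diagonal quadratic form ∑ i, a i * (x i)^2 is isotropic over ℚ (has a nonzero rational zero) if and only if it is isotropic over ℝ (there is a nonzero x : Fin n → ℝ with ∑ i, (a i : ℝ) * (x i)^2 = 0) and, for every prime p, it is isotropic over the p-adic field ℚ_p (there is a nonzero x : Fin n → ℚ_p with ∑ i, (a i : ℚ_p) * (x i)^2 = 0). (Hasse–Minkowski principle over ℚ.) -/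
/-!
The proof is by induction on the rank. In rank two the claim says that a rational number which is a
square in every completion is a square; rank three is Legendre's theorem, proved by descent on
`|a| + |b|` for the conic `x² = a y² + b z²`.

A form `⟨a, b⟩ ⊥ c` of higher rank is isotropic if and only if `⟨-t, a, b⟩` and `⟨t⟩ ⊥ c` both are,
for some `t ≠ 0`. Let `S` be the set of bad primes and let `t` be chosen locally at `∞` and at the
primes of `S`. By the Chinese remainder theorem and Dirichlet's theorem there is a rational `t` in
the given local square classes which is an `S`-unit times a single prime `q` outside `S`. Both forms
are then isotropic at all places except possibly `q`. At `q`, Hilbert's product formula takes care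
of the ternary forms, and in `⟨t⟩ ⊥ c` of rank at least four the form `c` is isotropic by itself.
-/

open scoped NumberTheorySymbols
open Matrix (vecCons)
open ZMod (χ₄ χ₈)

section Field

variable {K : Type*} [Field K]

/-- Equality of two elements of `K` up to the square of a nonzero factor. -/
def SameSquareClass (a b : K) : Prop :=
  ∃ c : K, c ≠ 0 ∧ a = c ^ 2 * b

namespace SameSquareClass

theorem refl (a : K) : SameSquareClass a a :=
  ⟨1, one_ne_zero, by ring⟩

theorem symm {a b : K} (h : SameSquareClass a b) : SameSquareClass b a := by
  obtain ⟨c, hc, rfl⟩ := h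
  exact ⟨c⁻¹, inv_ne_zero hc, by field_simp⟩

theorem trans {a b c : K} (hab : SameSquareClass a b) (hbc : SameSquareClass b c) :
    SameSquareClass a c := by
  obtain ⟨d, hd, rfl⟩ := hab
  obtain ⟨e, he, rfl⟩ := hbc
  exact ⟨d * e, mul_ne_zero hd he, by ring⟩

theorem mul_left {a b : K} (h : SameSquareClass a b) (c : K) :
    SameSquareClass (c * a) (c * b) := by
  obtain ⟨d, hd, rfl⟩ := h
  exact ⟨d, hd, by ring⟩

theorem neg {a b : K} (h : SameSquareClass a b) : SameSquareClass (-a) (-b) := by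
  obtain ⟨c, hc, rfl⟩ := h
  exact ⟨c, hc, by ring⟩

theorem sq_mul {c : K} (hc : c ≠ 0) (a : K) : SameSquareClass (c ^ 2 * a) a :=
  ⟨c, hc, rfl⟩

end SameSquareClass

/-- Nontrivial solvability of `x² = a y² + b z²` over `K`, that is, triviality of the Hilbert
symbol `(a, b)` of `K`. -/
def HilbertSolvable (a b : K) : Prop :=
  ∃ x y z : K, (x ≠ 0 ∨ y ≠ 0 ∨ z ≠ 0) ∧ x ^ 2 = a * y ^ 2 + b * z ^ 2

namespace HilbertSolvable

theorem symm {a b : K} (h : HilbertSolvable a b) : HilbertSolvable b a := by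
  obtain ⟨x, y, z, h0, h⟩ := h
  exact ⟨x, z, y, by tauto, by rw [h, add_comm]⟩

theorem of_isSquare {a : K} (h : IsSquare a) (b : K) : HilbertSolvable a b := by
  obtain ⟨r, rfl⟩ := h
  exact ⟨r, 1, 0, by simp, by ring⟩

theorem congr_right {a b b' : K} (h : SameSquareClass b b') :
    HilbertSolvable a b ↔ HilbertSolvable a b' := by
  suffices H : ∀ {b b' : K}, SameSquareClass b b' → HilbertSolvable a b → HilbertSolvable a b' from
    ⟨H h, H h.symm⟩
  rintro _ b' ⟨c, hc, rfl⟩ ⟨x, y, z, h0, h⟩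
  exact ⟨x, y, c * z, by simpa [hc] using h0, by rw [h]; ring⟩

/-- The forms `x² - a y²` are multiplicative, and `b * b'` is a value of this form. -/
theorem of_sq_sub_eq_mul {a b b' t : K} (hb : b ≠ 0) (ht : t ^ 2 - a = b * b')
    (h : HilbertSolvable a b) : HilbertSolvable a b' := by
  obtain ⟨x, y, z, h0, h⟩ := h
  by_cases hz : z = 0
  · subst hz
    exact ⟨x, y, 0, h0, by rw [h]; ring⟩
  · refine ⟨x * t + a * y, x + t * y, b * z, Or.inr (Or.inr (mul_ne_zero hb hz)), ?_⟩
    linear_combination (t ^ 2 - a) * h + b * z ^ 2 * ht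

theorem iff_of_sq_sub_eq_mul {a b b' t : K} (hb : b ≠ 0) (ht : t ^ 2 - a = b * b') :
    HilbertSolvable a b ↔ HilbertSolvable a b' := by
  refine ⟨of_sq_sub_eq_mul hb ht, fun h => ?_⟩
  by_cases hb' : b' = 0
  · exact of_isSquare ⟨t, by linear_combination -ht - b * hb'⟩ b
  · exact of_sq_sub_eq_mul hb' (by rw [ht, mul_comm]) h

theorem neg_mul_right {a b : K} (ha : a ≠ 0) (h : HilbertSolvable a b) :
    HilbertSolvable a (-(a * b)) := by
  obtain ⟨x, y, z, h0, h⟩ := h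
  refine ⟨a * y, x, z, ?_, by rw [h]; ring⟩
  simp only [ne_eq, mul_eq_zero, ha, false_or]
  tauto

end HilbertSolvable

/-- Existence of a nontrivial zero of the diagonal form with coefficients `a i`. -/
def DiagIsotropic {ι : Type*} [Fintype ι] (a : ι → K) : Prop :=
  ∃ x : ι → K, x ≠ 0 ∧ ∑ i, a i * x i ^ 2 = 0

section Family

variable {ι : Type*} [Fintype ι]

theorem DiagIsotropic.map {L : Type*} [Field L] (f : K →+* L) {a : ι → K}
    (h : DiagIsotropic a) : DiagIsotropic (f ∘ a) := by
  obtain ⟨x, hx, h⟩ := h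
  refine ⟨f ∘ x, fun h0 => hx (funext fun i => f.injective ?_), ?_⟩
  · simpa using congrFun h0 i
  · simpa using congrArg f h

theorem diagIsotropic_congr {a b : ι → K} (h : ∀ i, SameSquareClass (a i) (b i)) :
    DiagIsotropic a ↔ DiagIsotropic b := by
  suffices H : ∀ {a b : ι → K}, (∀ i, SameSquareClass (a i) (b i)) →
      DiagIsotropic a → DiagIsotropic b from ⟨H h, H fun i => (h i).symm⟩
  rintro a b h ⟨x, hx, hsum⟩
  choose c hc hab using h
  refine ⟨fun i => c i * x i, fun h0 => hx (funext fun i => ?_), ?_⟩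
  · simpa [hc i] using congrFun h0 i
  · rw [← hsum]
    exact Finset.sum_congr rfl fun i _ => by rw [hab i]; ring

end Family

theorem diagIsotropic_cons_iff {n : ℕ} {a : K} {b : Fin n → K} :
    DiagIsotropic (vecCons a b) ↔
      ∃ (x : K) (y : Fin n → K), (x ≠ 0 ∨ y ≠ 0) ∧ a * x ^ 2 + ∑ i, b i * y i ^ 2 = 0 := by
  simp [DiagIsotropic, Fin.exists_fin_succ_pi, Fin.sum_univ_succ, ← Matrix.vecCons.eq_1,
    Matrix.cons_eq_zero_iff, imp_iff_not_or]

theorem DiagIsotropic.cons {n : ℕ} {b : Fin n → K} (h : DiagIsotropic b) (a : K) :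
    DiagIsotropic (vecCons a b) := by
  obtain ⟨y, hy, hsum⟩ := h
  exact diagIsotropic_cons_iff.2 ⟨0, y, Or.inr hy, by simpa using hsum⟩

theorem diagIsotropic_cons_congr {n : ℕ} {a a' : K} (h : SameSquareClass a a')
    (b : Fin n → K) : DiagIsotropic (vecCons a b) ↔ DiagIsotropic (vecCons a' b) :=
  diagIsotropic_congr (Fin.cases h fun _ => SameSquareClass.refl _)

theorem diagIsotropic_cons_cons_iff {n : ℕ} {a b : K} {c : Fin n → K} :
    DiagIsotropic (vecCons a (vecCons b c)) ↔
      ∃ (x y : K) (z : Fin n → K), (x ≠ 0 ∨ y ≠ 0 ∨ z ≠ 0) ∧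
        a * x ^ 2 + b * y ^ 2 + ∑ i, c i * z i ^ 2 = 0 := by
  simp [diagIsotropic_cons_iff, Fin.exists_fin_succ_pi, Fin.sum_univ_succ, ← Matrix.vecCons.eq_1,
    Matrix.cons_eq_zero_iff, imp_iff_not_or, add_assoc]

theorem diagIsotropic_binary_iff {a b : K} (ha : a ≠ 0) :
    DiagIsotropic ![a, b] ↔ IsSquare (-(a * b)) := by
  simp only [diagIsotropic_cons_cons_iff, Fin.sum_univ_zero, add_zero]
  constructor
  · rintro ⟨x, y, z, h0, h⟩
    have hy : y ≠ 0 := by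
      rintro rfl
      have hx : x = 0 := by simpa [ha] using h
      exact h0.elim (· hx) fun h => h.elim (· rfl) (· (Subsingleton.elim _ _))
    refine ⟨a * x / y, ?_⟩
    field_simp
    linear_combination -h
  · rintro ⟨r, hr⟩
    exact ⟨r, a, 0, by simp [ha], by linear_combination -a * hr⟩

theorem diagIsotropic_ternary_iff {a b c : K} (hb : b ≠ 0) :
    DiagIsotropic ![a, b, c] ↔ HilbertSolvable (-(b * c)) (-(b * a)) := by
  constructor
  · rintro ⟨x, hx, h⟩
    simp only [Fin.sum_univ_three, Matrix.cons_val] at h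
    refine ⟨b * x 1, x 2, x 0, ?_, by linear_combination b * h⟩
    contrapose! hx
    obtain ⟨h1, h2, h0⟩ := hx
    simpa [funext_iff, Fin.forall_fin_succ, h2, h0, hb] using h1
  · rintro ⟨x, y, z, h0, h⟩
    refine ⟨![z, x / b, y], ?_, ?_⟩
    · simp only [ne_eq, Matrix.cons_eq_zero_iff, div_eq_zero_iff, hb, or_false]
      tauto
    · simp only [Fin.sum_univ_three, Matrix.cons_val]
      field_simp
      linear_combination h

theorem DiagIsotropic.exists_binary_eq [NeZero (2 : K)] {a b : K} (ha : a ≠ 0) (hb : b ≠ 0)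
    (h : DiagIsotropic ![a, b]) (t : K) : ∃ x y : K, a * x ^ 2 + b * y ^ 2 = t := by
  obtain ⟨r, hr⟩ := (diagIsotropic_binary_iff ha).1 h
  have h2 : (2 : K) ≠ 0 := two_ne_zero
  have hr0 : r ≠ 0 := by
    rintro rfl
    simp [ha, hb] at hr
  refine ⟨(t / a + 1) / 2, (t / a - 1) / 2 * (a / r), ?_⟩
  field_simp
  linear_combination -(t - a) ^ 2 * hr

theorem diagIsotropic_cons_of_sum_eq {n : ℕ} {t : K} {c z : Fin n → K}
    (h : ∑ i, c i * z i ^ 2 = -t) : DiagIsotropic (vecCons t c) :=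
  diagIsotropic_cons_iff.2 ⟨1, z, Or.inl one_ne_zero, by rw [h]; ring⟩

/-- At a zero of the form take `t` to be the value of the binary part; if it vanishes, one of the
two parts is isotropic, hence represents everything. -/
theorem DiagIsotropic.exists_split [NeZero (2 : K)] {n : ℕ} {a b : K} {c : Fin (n + 1) → K}
    (ha : a ≠ 0) (hb : b ≠ 0) (hc : c 0 ≠ 0)
    (h : DiagIsotropic (vecCons a (vecCons b c))) :
    ∃ t : K, t ≠ 0 ∧ DiagIsotropic ![-t, a, b] ∧ DiagIsotropic (vecCons t c) := by
  obtain ⟨x, y, z, h0, h⟩ := diagIsotropic_cons_cons_iff.1 h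
  have of_value : ∀ {x y t : K}, a * x ^ 2 + b * y ^ 2 = t → DiagIsotropic ![-t, a, b] :=
    fun {x y t} h => diagIsotropic_cons_of_sum_eq (z := ![x, y]) (by simpa using h)
  by_cases ht : a * x ^ 2 + b * y ^ 2 = 0
  · rw [ht, zero_add] at h
    by_cases hz : z = 0
    · have hbin : DiagIsotropic ![a, b] :=
        diagIsotropic_cons_cons_iff.2 ⟨x, y, 0, by tauto, by simpa using ht⟩
      obtain ⟨u, v, huv⟩ := hbin.exists_binary_eq ha hb (-c 0)
      refine ⟨-c 0, neg_ne_zero.2 hc, of_value huv, ?_⟩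
      exact diagIsotropic_cons_of_sum_eq (z := Pi.single 0 1) (by simp [Pi.single_apply])
    · exact ⟨a, ha, of_value (x := 1) (y := 0) (by ring), DiagIsotropic.cons ⟨z, hz, h⟩ a⟩
  · exact ⟨_, ht, of_value rfl, diagIsotropic_cons_of_sum_eq (z := z) (by linear_combination h)⟩

theorem DiagIsotropic.of_split {n : ℕ} {a b t : K} {c : Fin n → K} (ht : t ≠ 0)
    (hl : DiagIsotropic ![-t, a, b]) (hr : DiagIsotropic (vecCons t c)) :
    DiagIsotropic (vecCons a (vecCons b c)) := by
  obtain ⟨s, x, y, hne, hl⟩ : ∃ s x y : K, (s ≠ 0 ∨ x ≠ 0 ∨ y ≠ 0) ∧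
      -t * s ^ 2 + a * x ^ 2 + b * y ^ 2 = 0 := by
    obtain ⟨s, v, hne, hl⟩ := diagIsotropic_cons_iff.1 hl
    refine ⟨s, v 0, v 1, ?_, by simpa [add_assoc] using hl⟩
    simpa [funext_iff, Fin.forall_fin_two, imp_iff_not_or] using hne
  obtain ⟨w, z, hwz, hr⟩ := diagIsotropic_cons_iff.1 hr
  refine diagIsotropic_cons_cons_iff.2 ?_
  by_cases hw : w = 0
  · exact ⟨0, 0, z, by tauto, by simpa [hw] using hr⟩
  have hxy : x ≠ 0 ∨ y ≠ 0 := by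
    by_contra! h
    have hs : s = 0 := by simpa [h, ht] using hl
    tauto
  refine ⟨w * x, w * y, s • z, by simpa [hw] using hxy.imp_right Or.inl, ?_⟩
  have hz : ∑ i, c i * (s • z) i ^ 2 = s ^ 2 * ∑ i, c i * z i ^ 2 := by
    simp only [Pi.smul_apply, smul_eq_mul, mul_pow, Finset.mul_sum, mul_left_comm]
  linear_combination w ^ 2 * hl + s ^ 2 * hr + hz

end Field

section Padic

variable {p : ℕ} [hp : Fact p.Prime]

theorem isSquare_of_norm_sub_one_lt {u : ℚ_[p]} (h : ‖u - 1‖ < ‖(2 : ℚ_[p])‖ ^ 2) :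
    IsSquare u := by
  have h2 : ‖(2 : ℚ_[p])‖ ≤ 1 := by simpa using Padic.norm_int_le_one (p := p) 2
  have hu : ‖u‖ ≤ 1 := by
    have hmax := Padic.nonarchimedean (u - 1) 1
    rw [sub_add_cancel, norm_one] at hmax
    exact hmax.trans (max_le (h.le.trans (pow_le_one₀ (norm_nonneg _) h2)) le_rfl)
  obtain ⟨u, rfl⟩ : ∃ v : ℤ_[p], (v : ℚ_[p]) = u := ⟨⟨u, hu⟩, rfl⟩
  obtain ⟨z, hz, -⟩ := hensels_lemma (p := p) (R := ℤ_[p])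
    (F := Polynomial.X ^ 2 - Polynomial.C u) (a := 1) (by
      simp only [map_sub, map_pow, Polynomial.aeval_X, Polynomial.aeval_C, one_pow,
        Polynomial.derivative_X_pow, Polynomial.derivative_C, sub_zero, map_mul]
      rw [norm_sub_rev]
      simp only [PadicInt.norm_def]
      have coe_two : ((2 : ℤ_[p]) : ℚ_[p]) = 2 := rfl
      simpa [coe_two] using h)
  simp only [map_sub, map_pow, Polynomial.aeval_X, Polynomial.aeval_C, Algebra.algebraMap_self,
    RingHom.id_apply, sub_eq_zero] at hz
  exact ⟨z, by rw [← hz]; push_cast; ring⟩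

theorem sameSquareClass_of_norm_sub_lt {u t : ℚ_[p]}
    (h : ‖u - t‖ < ‖(2 : ℚ_[p])‖ ^ 2 * ‖t‖) : SameSquareClass u t := by
  have h2 : ‖(2 : ℚ_[p])‖ ≤ 1 := by simpa using Padic.norm_int_le_one (p := p) 2
  have ht : t ≠ 0 := by
    rintro rfl
    simp [(norm_nonneg u).not_gt] at h
  have hut : ‖u / t - 1‖ < ‖(2 : ℚ_[p])‖ ^ 2 := by
    rwa [div_sub_one ht, norm_div, div_lt_iff₀ (norm_pos_iff.2 ht)]
  obtain ⟨c, hc⟩ := isSquare_of_norm_sub_one_lt hut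
  refine ⟨c, ?_, by rw [sq, ← hc, div_mul_cancel₀ _ ht]⟩
  rintro rfl
  rw [hc, mul_zero, zero_sub, norm_neg, norm_one] at hut
  exact hut.not_ge (pow_le_one₀ (norm_nonneg _) h2)

theorem padicNorm_intCast_eq_one {a : ℤ} (ha : ¬ (p : ℤ) ∣ a) : ‖(a : ℚ_[p])‖ = 1 :=
  le_antisymm (Padic.norm_int_le_one a) (not_lt.1 (Padic.norm_intCast_lt_one_iff.not.2 ha))

theorem not_dvd_two (hp2 : p ≠ 2) : ¬ (p : ℤ) ∣ 2 := fun h =>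
  hp2 ((Nat.prime_dvd_prime_iff_eq hp.out Nat.prime_two).1 (by exact_mod_cast h))

theorem isSquare_intCast_of_isSquare_zmod (hp2 : p ≠ 2) {a : ℤ} (ha : ¬ (p : ℤ) ∣ a)
    (h : IsSquare (a : ZMod p)) : IsSquare (a : ℚ_[p]) := by
  obtain ⟨r, hr⟩ := h
  obtain ⟨r, rfl⟩ := ZMod.intCast_surjective r
  have hd : (p : ℤ) ∣ a - r ^ 2 := by
    rw [← ZMod.intCast_zmod_eq_zero_iff_dvd]
    push_cast
    rw [hr]
    ring
  have hr1 : ‖((r ^ 2 : ℤ) : ℚ_[p])‖ = 1 :=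
    padicNorm_intCast_eq_one fun h => ha ((dvd_sub_left h).1 hd)
  have h2 : ‖(2 : ℚ_[p])‖ = 1 := by exact_mod_cast padicNorm_intCast_eq_one (not_dvd_two hp2)
  obtain ⟨c, -, hc⟩ : SameSquareClass (a : ℚ_[p]) (r ^ 2 : ℤ) := by
    apply sameSquareClass_of_norm_sub_lt
    rw [h2, hr1, ← Int.cast_sub, one_pow, one_mul]
    exact Padic.norm_intCast_lt_one_iff.2 hd
  exact ⟨c * r, by rw [hc]; push_cast; ring⟩

theorem exists_mul_sq_add_mul_sq_eq (hp2 : p ≠ 2) {a b : ZMod p} (ha : a ≠ 0) (hb : b ≠ 0)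
    (c : ZMod p) : ∃ x y : ZMod p, a * x ^ 2 + b * y ^ 2 = c := by
  open Polynomial in
  have key := @FiniteField.exists_root_sum_quadratic (ZMod p) _ _ _
    (C a * X ^ 2) (C b * X ^ 2 - C c) (degree_C_mul_X_pow 2 ha) (by
      rw [degree_sub_C] <;> rw [degree_C_mul_X_pow 2 hb] <;> norm_num) (by
      rw [ZMod.card]
      exact hp.out.eq_two_or_odd.resolve_left hp2)
  obtain ⟨x, y, h⟩ := key
  refine ⟨x, y, ?_⟩
  simp only [Polynomial.eval_sub, Polynomial.eval_mul, Polynomial.eval_C, Polynomial.eval_pow,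
    Polynomial.eval_X] at h
  linear_combination h

theorem HilbertSolvable.of_not_dvd (hp2 : p ≠ 2) {a b : ℤ} (ha : ¬ (p : ℤ) ∣ a)
    (hb : ¬ (p : ℤ) ∣ b) : HilbertSolvable (a : ℚ_[p]) b := by
  simp only [← ZMod.intCast_zmod_eq_zero_iff_dvd] at ha hb
  obtain ⟨y, z, hyz⟩ := exists_mul_sq_add_mul_sq_eq hp2 ha hb 1
  obtain ⟨y, rfl⟩ := ZMod.intCast_surjective y
  obtain ⟨z, rfl⟩ := ZMod.intCast_surjective z
  have hone : ((a * y ^ 2 + b * z ^ 2 : ℤ) : ZMod p) = 1 := by exact_mod_cast hyz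
  obtain ⟨x, hx⟩ : IsSquare ((a * y ^ 2 + b * z ^ 2 : ℤ) : ℚ_[p]) := by
    refine isSquare_intCast_of_isSquare_zmod hp2 ?_ (by rw [hone]; exact IsSquare.one)
    rw [← ZMod.intCast_zmod_eq_zero_iff_dvd, hone]
    exact one_ne_zero
  refine ⟨x, y, z, ?_, by rw [sq, ← hx]; push_cast; ring⟩
  by_contra! h0
  obtain ⟨-, hy, hz⟩ := h0
  simp [Int.cast_eq_zero.1 hy, Int.cast_eq_zero.1 hz] at hyz

theorem exists_primitive_multiple {ι : Type*} [Finite ι] {x : ι → ℚ_[p]} (hx : x ≠ 0) :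
    ∃ (c : ℚ_[p]) (y : ι → ℤ_[p]), c ≠ 0 ∧ (∃ i, IsUnit (y i)) ∧ ∀ i, x i = c * y i := by
  obtain ⟨j, hj⟩ := Function.ne_iff.1 hx
  have : Nonempty ι := ⟨j⟩
  obtain ⟨i, hi⟩ := Finite.exists_max fun i => ‖x i‖
  have hxi : 0 < ‖x i‖ := (norm_pos_iff.2 hj).trans_le (hi j)
  have hxi0 : x i ≠ 0 := norm_pos_iff.1 hxi
  have hdiv : ∀ j, ∃ y : ℤ_[p], (y : ℚ_[p]) = x j / x i := fun j =>
    ⟨⟨x j / x i, by rw [norm_div]; exact (div_le_one hxi).2 (hi j)⟩, rfl⟩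
  choose y hy using hdiv
  refine ⟨x i, y, hxi0, ⟨i, ?_⟩, fun j => by rw [hy]; field_simp⟩
  rw [PadicInt.isUnit_iff, PadicInt.norm_def, hy, div_self hxi0, norm_one]

theorem HilbertSolvable.exists_primitive {a b : ℤ} (h : HilbertSolvable (a : ℚ_[p]) b) :
    ∃ x y z : ℤ_[p], (IsUnit x ∨ IsUnit y ∨ IsUnit z) ∧ x ^ 2 = a * y ^ 2 + b * z ^ 2 := by
  obtain ⟨x, y, z, h0, h⟩ := h
  have hne : ![x, y, z] ≠ 0 := by simpa [imp_iff_not_or] using h0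
  obtain ⟨c, v, hc, hv, hxyz⟩ := exists_primitive_multiple hne
  refine ⟨v 0, v 1, v 2, by simpa [Fin.exists_fin_succ] using hv, ?_⟩
  obtain rfl : x = c * v 0 := hxyz 0
  obtain rfl : y = c * v 1 := hxyz 1
  obtain rfl : z = c * v 2 := hxyz 2
  apply PadicInt.ext
  push_cast
  exact mul_left_cancel₀ (pow_ne_zero 2 hc) (by linear_combination h)

theorem not_isUnit_iff_dvd {x : ℤ_[p]} : ¬ IsUnit x ↔ (p : ℤ_[p]) ∣ x := by
  rw [PadicInt.not_isUnit_iff, PadicInt.norm_lt_one_iff_dvd]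

theorem HilbertSolvable.isSquare_zmod {a b : ℤ} (hpb : (p : ℤ) ∣ b) (hb : ¬ (p : ℤ) ^ 2 ∣ b)
    (h : HilbertSolvable (a : ℚ_[p]) b) : IsSquare (a : ZMod p) := by
  obtain ⟨x, y, z, hunit, h⟩ := h.exists_primitive
  obtain ⟨c, rfl⟩ := hpb
  by_cases hy : IsUnit y
  · obtain ⟨y, rfl⟩ := hy
    have hmod := congrArg PadicInt.toZMod h
    simp only [map_pow, map_add, map_mul, map_intCast, Int.cast_mul, Int.cast_natCast, map_natCast,
      CharP.cast_eq_zero, zero_mul, add_zero] at hmod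
    have hy0 : PadicInt.toZMod (y : ℤ_[p]) ≠ 0 := (y.isUnit.map PadicInt.toZMod).ne_zero
    exact ⟨PadicInt.toZMod x / PadicInt.toZMod (y : ℤ_[p]), by field_simp; exact hmod.symm⟩
  · have hpp : Prime (p : ℤ_[p]) := PadicInt.prime_p
    have hc : ¬ (p : ℤ_[p]) ∣ c := fun hd => hb (by
      rw [sq]
      refine mul_dvd_mul_left _ ((PadicInt.norm_int_lt_one_iff_dvd c).1 ?_)
      exact (PadicInt.norm_lt_one_iff_dvd _).2 hd)
    push_cast at h
    obtain ⟨y, rfl⟩ := not_isUnit_iff_dvd.1 hy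
    obtain ⟨x, rfl⟩ : (p : ℤ_[p]) ∣ x :=
      hpp.dvd_of_dvd_pow ⟨a * p * y ^ 2 + c * z ^ 2, by rw [h]; ring⟩
    have hcz : (p : ℤ_[p]) ∣ c * z ^ 2 :=
      ⟨x ^ 2 - a * y ^ 2, mul_left_cancel₀ hpp.ne_zero (by linear_combination -h)⟩
    have hz : (p : ℤ_[p]) ∣ z := hpp.dvd_of_dvd_pow ((hpp.dvd_or_dvd hcz).resolve_left hc)
    rcases hunit with hu | hu | hu
    · exact absurd hu (not_isUnit_iff_dvd.2 (dvd_mul_right _ _))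
    · exact absurd hu hy
    · exact absurd hu (not_isUnit_iff_dvd.2 hz)

end Padic

/-- The property `P` holds for every completion of `ℚ`. -/
def EverywhereLocally (P : ∀ (K : Type) [Field K], Prop) : Prop :=
  P ℝ ∧ ∀ (p : ℕ) [Fact p.Prime], P ℚ_[p]

theorem EverywhereLocally.mono {P Q : ∀ (K : Type) [Field K], Prop} (h : EverywhereLocally P)
    (hPQ : ∀ (K : Type) [Field K] [CharZero K], P K → Q K) : EverywhereLocally Q :=
  ⟨hPQ ℝ h.1, fun p _ => hPQ ℚ_[p] (h.2 p)⟩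

section Legendre

theorem isSquare_zmod_of_squarefree {a : ℤ} {n : ℕ} (hn : Squarefree n)
    (h : ∀ p : ℕ, p.Prime → p ∣ n → IsSquare (a : ZMod p)) : IsSquare (a : ZMod n) := by
  induction n using induction_on_primes with
  | zero => exact absurd hn not_squarefree_zero
  | one => exact ⟨0, Subsingleton.elim _ _⟩
  | prime_mul p m hp ih =>
    have hcop : Nat.Coprime p m := Nat.coprime_of_squarefree_mul hn
    obtain ⟨r, hr⟩ := h p hp (dvd_mul_right p m)
    obtain ⟨s, hs⟩ := ih (hn.squarefree_of_dvd (dvd_mul_left m p))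
      fun q hq hqm => h q hq (hqm.mul_left p)
    have hprod : IsSquare (a : ZMod p × ZMod m) := ⟨(r, s), Prod.ext hr hs⟩
    simpa only [map_intCast] using hprod.map (ZMod.chineseRemainder hcop).symm

theorem exists_sq_sub_eq_mul_of_isSquare_zmod {a b : ℤ} (hb : b ≠ 0)
    (h : IsSquare (a : ZMod b.natAbs)) :
    ∃ t b' : ℤ, 2 * t.natAbs ≤ b.natAbs ∧ t ^ 2 - a = b * b' := by
  have : NeZero b.natAbs := ⟨Int.natAbs_ne_zero.2 hb⟩
  obtain ⟨r, hr⟩ := h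
  have hdvd : (b.natAbs : ℤ) ∣ r.valMinAbs ^ 2 - a := by
    rw [← ZMod.intCast_zmod_eq_zero_iff_dvd]
    push_cast
    rw [hr]
    ring
  obtain ⟨b', hb'⟩ := Int.natAbs_dvd.1 hdvd
  have := r.natAbs_valMinAbs_le
  exact ⟨r.valMinAbs, b', by omega, hb'⟩

theorem natAbs_lt_of_sq_sub_eq_mul {a b b' t : ℤ} (hab : a.natAbs ≤ b.natAbs)
    (hb : 2 ≤ b.natAbs) (ht : 2 * t.natAbs ≤ b.natAbs) (h : t ^ 2 - a = b * b') :
    b'.natAbs < b.natAbs := by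
  zify at *
  have hle : |b| * |b'| ≤ |t| ^ 2 + |a| := by
    rw [← abs_mul, ← h, ← abs_pow]
    exact abs_sub _ _
  by_contra! hcon
  nlinarith [mul_le_mul hcon le_rfl (abs_nonneg b) (abs_nonneg b'), abs_nonneg t]

theorem exists_descent_of_squarefree {a b : ℤ} (hb : Squarefree b) (hab : a.natAbs ≤ b.natAbs)
    (hb2 : 2 ≤ b.natAbs) (h : ∀ (p : ℕ) [Fact p.Prime], HilbertSolvable (a : ℚ_[p]) b) :
    ∃ b' : ℤ, b'.natAbs < b.natAbs ∧ ∀ (K : Type) [Field K] [CharZero K],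
      HilbertSolvable (a : K) b ↔ HilbertSolvable (a : K) b' := by
  have hsq : IsSquare (a : ZMod b.natAbs) := by
    refine isSquare_zmod_of_squarefree (Int.squarefree_natAbs.2 hb) fun p hp hpb => ?_
    have : Fact p.Prime := ⟨hp⟩
    refine (h p).isSquare_zmod (Int.natCast_dvd.2 hpb) fun hd => ?_
    rw [sq] at hd
    exact (Nat.prime_iff_prime_int.1 hp).not_isUnit (hb _ hd)
  obtain ⟨t, b', ht, hb'⟩ := exists_sq_sub_eq_mul_of_isSquare_zmod hb.ne_zero hsq
  refine ⟨b', natAbs_lt_of_sq_sub_eq_mul hab hb2 ht hb', fun K _ _ => ?_⟩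
  exact HilbertSolvable.iff_of_sq_sub_eq_mul (t := (t : K)) (Int.cast_ne_zero.2 hb.ne_zero)
    (by exact_mod_cast congrArg (Int.cast : ℤ → K) hb')

theorem exists_descent_of_not_squarefree (a : ℤ) {b : ℤ} (hb0 : b ≠ 0) (hb : ¬ Squarefree b) :
    ∃ b' : ℤ, b'.natAbs < b.natAbs ∧ ∀ (K : Type) [Field K] [CharZero K],
      HilbertSolvable (a : K) b ↔ HilbertSolvable (a : K) b' := by
  obtain ⟨c, ⟨b', rfl⟩, hc⟩ : ∃ c : ℤ, c * c ∣ b ∧ ¬ IsUnit c := by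
    simpa [Squarefree] using hb
  obtain ⟨⟨hc0, -⟩, hb'0⟩ : (c ≠ 0 ∧ c ≠ 0) ∧ b' ≠ 0 := by simpa using hb0
  refine ⟨b', ?_, fun K _ _ => HilbertSolvable.congr_right ⟨c, Int.cast_ne_zero.2 hc0, ?_⟩⟩
  · have hc1 : c.natAbs ≠ 1 := fun h => hc (Int.isUnit_iff_natAbs_eq.2 h)
    rw [Int.natAbs_mul, Int.natAbs_mul]
    refine lt_mul_of_one_lt_left (Int.natAbs_pos.2 hb'0) ?_
    have := Int.natAbs_pos.2 hc0
    exact Nat.one_lt_mul_iff.2 ⟨this, this, by omega⟩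
  · push_cast
    ring

theorem hilbertSolvable_rat_of_natAbs_le_one {a b : ℤ} (ha : a.natAbs ≤ 1) (hb : b.natAbs ≤ 1)
    (h : HilbertSolvable (a : ℝ) b) : HilbertSolvable (a : ℚ) b := by
  have isSquare_cast : ∀ {c : ℤ}, c.natAbs ≤ 1 → c ≠ -1 → IsSquare (c : ℚ) := fun {c} hc hne => by
    obtain rfl | rfl : c = 0 ∨ c = 1 := by omega
    all_goals simp
  by_cases ha1 : a = -1
  · by_cases hb1 : b = -1
    · subst ha1 hb1
      obtain ⟨x, y, z, h0, h⟩ := h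
      push_cast at h
      have hx : x = 0 := by nlinarith [sq_nonneg x, sq_nonneg y, sq_nonneg z]
      have hy : y = 0 := by nlinarith [sq_nonneg x, sq_nonneg y, sq_nonneg z]
      have hz : z = 0 := by nlinarith [sq_nonneg x, sq_nonneg y, sq_nonneg z]
      tauto
    · exact (HilbertSolvable.of_isSquare (isSquare_cast hb hb1) _).symm
  · exact .of_isSquare (isSquare_cast ha ha1) _

theorem hilbertSolvable_rat_of_everywhereLocally {a b : ℤ}
    (h : EverywhereLocally fun K _ => HilbertSolvable (a : K) b) : HilbertSolvable (a : ℚ) b := by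
  induction hN : a.natAbs + b.natAbs using Nat.strong_induction_on generalizing a b with
  | _ N ih =>
  wlog hab : a.natAbs ≤ b.natAbs generalizing a b
  · exact (this (h.mono fun _ _ _ => HilbertSolvable.symm) (by omega) (by omega)).symm
  by_cases hb2 : 2 ≤ b.natAbs
  · obtain ⟨b', hlt, hiff⟩ : ∃ b' : ℤ, b'.natAbs < b.natAbs ∧ ∀ (K : Type) [Field K] [CharZero K],
        HilbertSolvable (a : K) b ↔ HilbertSolvable (a : K) b' := by
      by_cases hsq : Squarefree b
      · exact exists_descent_of_squarefree hsq hab hb2 h.2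
      · exact exists_descent_of_not_squarefree a (by omega) hsq
    exact (hiff ℚ).2 (ih _ (by omega) (h.mono fun K _ _ => (hiff K).1) rfl)
  · exact hilbertSolvable_rat_of_natAbs_le_one (by omega) (by omega) h.1

end Legendre

section Symbol

/-- The formal properties of the Hilbert symbol: a symmetric bimultiplicative pairing on the nonzero
elements of `R`, with values squaring to `1` and trivial on the pairs `(a, -a)`. Values at `0` are
unconstrained except for symmetry. -/
structure IsQuadraticSymbol {R M : Type*} [CommRing R] [CommMonoid M] (H : R → R → M) : Prop where
  mul_left {a b : R} (c : R) (ha : a ≠ 0) (hb : b ≠ 0) : H (a * b) c = H a c * H b c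
  comm (a b : R) : H a b = H b a
  sq_eq_one {a b : R} (ha : a ≠ 0) (hb : b ≠ 0) : H a b ^ 2 = 1
  neg_self {a : R} (ha : a ≠ 0) : H a (-a) = 1

namespace IsQuadraticSymbol

variable {R M : Type*} [CommRing R] [CommMonoid M] {H H' : R → R → M}

theorem mul (hH : IsQuadraticSymbol H) (hH' : IsQuadraticSymbol H') :
    IsQuadraticSymbol fun a b => H a b * H' a b where
  mul_left c ha hb := by rw [hH.mul_left c ha hb, hH'.mul_left c ha hb, mul_mul_mul_comm]
  comm a b := by rw [hH.comm, hH'.comm]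
  sq_eq_one ha hb := by rw [mul_pow, hH.sq_eq_one ha hb, hH'.sq_eq_one ha hb, one_mul]
  neg_self ha := by rw [hH.neg_self ha, hH'.neg_self ha, one_mul]

theorem prod {ι : Type*} {s : Finset ι} {F : ι → R → R → M}
    (hF : ∀ i ∈ s, IsQuadraticSymbol (F i)) : IsQuadraticSymbol fun a b => ∏ i ∈ s, F i a b where
  mul_left c ha hb := by
    rw [← Finset.prod_mul_distrib]
    exact Finset.prod_congr rfl fun i hi => (hF i hi).mul_left c ha hb
  comm a b := Finset.prod_congr rfl fun i hi => (hF i hi).comm a b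
  sq_eq_one ha hb := by
    rw [← Finset.prod_pow]
    exact Finset.prod_eq_one fun i hi => (hF i hi).sq_eq_one ha hb
  neg_self ha := Finset.prod_eq_one fun i hi => (hF i hi).neg_self ha

theorem mul_right (hH : IsQuadraticSymbol H) (a : R) {b c : R} (hb : b ≠ 0) (hc : c ≠ 0) :
    H a (b * c) = H a b * H a c := by
  rw [hH.comm, hH.mul_left a hb hc, hH.comm b, hH.comm c]

theorem neg_mul_right (hH : IsQuadraticSymbol H) {a b : R} (ha : a ≠ 0) (hb : b ≠ 0) :
    H a (-(a * b)) = H a b := by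
  rw [← neg_mul, hH.mul_right a (neg_ne_zero.2 ha) hb, hH.neg_self ha, one_mul]

theorem self_eq_neg_one (hH : IsQuadraticSymbol H) [Nontrivial R] {a : R} (ha : a ≠ 0) :
    H a a = H a (-1) := by
  simpa using hH.neg_mul_right ha (neg_ne_zero.2 (one_ne_zero (α := R)))

theorem sq_mul_left [NoZeroDivisors R] (hH : IsQuadraticSymbol H) {a b c : R} (hc : c ≠ 0)
    (ha : a ≠ 0) (hb : b ≠ 0) : H (c ^ 2 * a) b = H a b := by
  rw [sq, hH.mul_left _ (mul_ne_zero hc hc) ha, hH.mul_left _ hc hc, ← sq, hH.sq_eq_one hc hb,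
    one_mul]

end IsQuadraticSymbol

/-- The bilinear pairing on signs: `-1` exactly when both arguments are `-1`. -/
def signPairing (s t : ℤ) : ℤ := if s = -1 ∧ t = -1 then -1 else 1

theorem signPairing_mul_left {s₁ s₂ : ℤ} (h₁ : s₁ = 1 ∨ s₁ = -1) (h₂ : s₂ = 1 ∨ s₂ = -1) (t : ℤ) :
    signPairing (s₁ * s₂) t = signPairing s₁ t * signPairing s₂ t := by
  rcases h₁ with rfl | rfl <;> rcases h₂ with rfl | rfl <;> by_cases ht : t = -1 <;>
    simp [signPairing, ht]

theorem signPairing_comm (s t : ℤ) : signPairing s t = signPairing t s := by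
  simp only [signPairing, and_comm]

theorem signPairing_sq (s t : ℤ) : signPairing s t ^ 2 = 1 := by
  unfold signPairing
  split_ifs <;> rfl

theorem signPairing_neg_self {s : ℤ} (hs : s = 1 ∨ s = -1) : signPairing s (-s) = 1 := by
  rcases hs with rfl | rfl <;> rfl

/-- The Hilbert symbol of `ℝ`. -/
def realHilbertSym (a b : ℤ) : ℤ := signPairing a.sign b.sign

theorem isQuadraticSymbol_realHilbertSym : IsQuadraticSymbol realHilbertSym := by
  have sign_eq : ∀ {a : ℤ}, a ≠ 0 → a.sign = 1 ∨ a.sign = -1 := fun ha =>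
    (lt_or_gt_of_ne ha).symm.imp Int.sign_eq_one_of_pos Int.sign_eq_neg_one_of_neg
  constructor
  case mul_left =>
    intro a b c ha hb
    rw [realHilbertSym, Int.sign_mul, signPairing_mul_left (sign_eq ha) (sign_eq hb),
      realHilbertSym, realHilbertSym]
  case comm => exact fun a b => signPairing_comm _ _
  case sq_eq_one => exact fun _ _ => signPairing_sq _ _
  case neg_self =>
    intro a ha
    rw [realHilbertSym, Int.sign_neg, signPairing_neg_self (sign_eq ha)]

/-- The prime-to-`p` part of an integer. -/
def unitPart (p : ℕ) (a : ℤ) : ℤ := a / (p : ℤ) ^ padicValInt p a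

section UnitPart

variable {p : ℕ}

theorem pow_padicValInt_mul_unitPart (p : ℕ) (a : ℤ) :
    (p : ℤ) ^ padicValInt p a * unitPart p a = a :=
  Int.mul_ediv_cancel' (padicValInt_dvd a)

theorem unitPart_of_not_dvd {a : ℤ} (h : ¬ (p : ℤ) ∣ a) : unitPart p a = a := by
  rw [unitPart, padicValInt.eq_zero_of_not_dvd h, pow_zero, Int.ediv_one]

theorem padicValInt_neg (a : ℤ) : padicValInt p (-a) = padicValInt p a := by
  simp only [padicValInt, Int.natAbs_neg]

theorem unitPart_neg (a : ℤ) : unitPart p (-a) = -unitPart p a := by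
  rw [unitPart, padicValInt_neg, Int.neg_ediv_of_dvd (padicValInt_dvd a), unitPart]

variable [hp : Fact p.Prime]

theorem unitPart_mul {a b : ℤ} (ha : a ≠ 0) (hb : b ≠ 0) :
    unitPart p (a * b) = unitPart p a * unitPart p b := by
  have h0 : (p : ℤ) ^ padicValInt p (a * b) ≠ 0 :=
    pow_ne_zero _ (Int.natCast_ne_zero.2 hp.out.ne_zero)
  apply mul_left_cancel₀ h0
  rw [pow_padicValInt_mul_unitPart, padicValInt.mul ha hb, pow_add]
  conv_lhs => rw [← pow_padicValInt_mul_unitPart p a, ← pow_padicValInt_mul_unitPart p b]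
  ring

theorem not_dvd_unitPart {a : ℤ} (ha : a ≠ 0) : ¬ (p : ℤ) ∣ unitPart p a := by
  rintro ⟨k, hk⟩
  have h := pow_padicValInt_mul_unitPart p a
  rw [hk, ← mul_assoc, ← pow_succ] at h
  have := (padicValInt_dvd_iff (p := p) (padicValInt p a + 1) a).1 (Dvd.intro _ h)
  omega

theorem unitPart_self : unitPart p p = 1 := by
  rw [unitPart, padicValInt_self, pow_one]
  exact Int.ediv_self (Int.natCast_ne_zero.2 hp.out.ne_zero)

theorem exists_eq_sq_mul_not_dvd (p : ℕ) [hp : Fact p.Prime] {a : ℤ} (ha : a ≠ 0) :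
    ∃ c u : ℤ, c ≠ 0 ∧ ¬ (p : ℤ) ∣ u ∧ (a = c ^ 2 * u ∨ a = c ^ 2 * (p * u)) := by
  refine ⟨p ^ (padicValInt p a / 2), unitPart p a,
    pow_ne_zero _ (Int.natCast_ne_zero.2 hp.out.ne_zero), not_dvd_unitPart ha, ?_⟩
  have h := pow_padicValInt_mul_unitPart p a
  rcases Nat.mod_two_eq_zero_or_one (padicValInt p a) with h2 | h2
  · left
    rw [← pow_mul, Nat.div_mul_cancel (Nat.dvd_of_mod_eq_zero h2), h]
  · right
    rw [← mul_assoc, ← pow_mul, ← pow_succ,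
      show padicValInt p a / 2 * 2 + 1 = padicValInt p a by omega, h]

end UnitPart

section OddSymbol

/-- The Hilbert symbol of `ℚ_[p]` for an odd prime `p`. -/
def oddHilbertSym (p : ℕ) (a b : ℤ) : ℤ :=
  J(-1 | p) ^ (padicValInt p a * padicValInt p b) * J(unitPart p b | p) ^ padicValInt p a *
    J(unitPart p a | p) ^ padicValInt p b

variable {p : ℕ}

theorem oddHilbertSym_of_not_dvd {a b : ℤ} (ha : ¬ (p : ℤ) ∣ a) (hb : ¬ (p : ℤ) ∣ b) :
    oddHilbertSym p a b = 1 := by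
  simp [oddHilbertSym, padicValInt.eq_zero_of_not_dvd ha, padicValInt.eq_zero_of_not_dvd hb]

variable [hp : Fact p.Prime]

theorem jacobiSym_sq_eq_one_of_not_dvd {a : ℤ} (ha : ¬ (p : ℤ) ∣ a) : J(a | p) ^ 2 = 1 :=
  jacobiSym.sq_one (Int.isCoprime_iff_gcd_eq_one.1
    ((Prime.coprime_iff_not_dvd (Nat.prime_iff_prime_int.1 hp.out)).2 ha).symm)

theorem jacobiSym_neg_one_sq_eq_one : J(-1 | p) ^ 2 = 1 :=
  jacobiSym_sq_eq_one_of_not_dvd (dvd_neg.not.2 (Nat.prime_iff_prime_int.1 hp.out).not_dvd_one)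

theorem oddHilbertSym_neg_self {a : ℤ} (ha : a ≠ 0) : oddHilbertSym p a (-a) = 1 := by
  unfold oddHilbertSym
  rw [padicValInt_neg, unitPart_neg, neg_eq_neg_one_mul (unitPart p a), jacobiSym.mul_left]
  have hu := jacobiSym_sq_eq_one_of_not_dvd (not_dvd_unitPart (p := p) ha)
  set v := padicValInt p a
  obtain ⟨k, hk⟩ : Even (v * v + v) := by
    simpa only [Nat.mul_succ] using Nat.even_mul_succ_self v
  calc J(-1 | p) ^ (v * v) * (J(-1 | p) * J(unitPart p a | p)) ^ v * J(unitPart p a | p) ^ v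
      = J(-1 | p) ^ (v * v + v) * (J(unitPart p a | p) ^ 2) ^ v := by ring
    _ = 1 := by
      rw [hu, hk, ← two_mul, pow_mul, jacobiSym_neg_one_sq_eq_one, one_pow, one_pow, one_mul]

theorem isQuadraticSymbol_oddHilbertSym : IsQuadraticSymbol (oddHilbertSym p) where
  mul_left c ha hb := by
    simp only [oddHilbertSym, padicValInt.mul ha hb, unitPart_mul ha hb, jacobiSym.mul_left]
    ring
  comm a b := by
    simp only [oddHilbertSym, mul_comm (padicValInt p a)]
    ring
  sq_eq_one {a b} ha hb := by
    rw [oddHilbertSym, mul_pow, mul_pow, pow_right_comm, pow_right_comm _ (padicValInt p a),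
      pow_right_comm _ (padicValInt p b), jacobiSym_neg_one_sq_eq_one,
      jacobiSym_sq_eq_one_of_not_dvd (not_dvd_unitPart ha),
      jacobiSym_sq_eq_one_of_not_dvd (not_dvd_unitPart hb)]
    simp only [one_pow, one_mul]
  neg_self := oddHilbertSym_neg_self

theorem oddHilbertSym_mul_of_not_dvd {a b : ℤ} (ha : ¬ (p : ℤ) ∣ a) (hb : ¬ (p : ℤ) ∣ b) :
    oddHilbertSym p (p * a) b = J(b | p) := by
  have ha0 : a ≠ 0 := by
    rintro rfl
    simp at ha
  rw [isQuadraticSymbol_oddHilbertSym.mul_left _ (Int.natCast_ne_zero.2 hp.out.ne_zero) ha0,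
    oddHilbertSym_of_not_dvd ha hb, mul_one]
  simp [oddHilbertSym, padicValInt.eq_zero_of_not_dvd hb, unitPart_of_not_dvd hb]

end OddSymbol

section TwoSymbol

/-- The Hilbert symbol of `ℚ_[2]`. -/
def twoHilbertSym (a b : ℤ) : ℤ :=
  signPairing (χ₄ (unitPart 2 a)) (χ₄ (unitPart 2 b)) * χ₈ (unitPart 2 b) ^ padicValInt 2 a *
    χ₈ (unitPart 2 a) ^ padicValInt 2 b

theorem χ₄_eq_one_or_neg_one {a : ℤ} (ha : ¬ (2 : ℤ) ∣ a) : χ₄ a = 1 ∨ χ₄ a = -1 := by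
  rw [ZMod.χ₄_int_eq_if_mod_four]
  split_ifs with h2 h1
  · omega
  · exact Or.inl rfl
  · exact Or.inr rfl

theorem χ₈_sq_eq_one {a : ℤ} (ha : ¬ (2 : ℤ) ∣ a) : χ₈ a ^ 2 = 1 := by
  rw [ZMod.χ₈_int_eq_if_mod_eight]
  split_ifs with h2 h1
  · omega
  all_goals rfl

theorem twoHilbertSym_neg_self {a : ℤ} (ha : a ≠ 0) : twoHilbertSym a (-a) = 1 := by
  have hχ₄ := χ₄_eq_one_or_neg_one (not_dvd_unitPart (p := 2) ha)
  have hχ₈ := χ₈_sq_eq_one (not_dvd_unitPart (p := 2) ha)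
  have χ₈_neg (u : ZMod 8) : χ₈ (-u) = χ₈ u := by decide +revert
  have χ₄_neg (u : ZMod 4) : χ₄ (-u) = -χ₄ u := by decide +revert
  rw [twoHilbertSym, padicValInt_neg, unitPart_neg, Int.cast_neg, Int.cast_neg, χ₄_neg, χ₈_neg,
    signPairing_neg_self hχ₄, one_mul, ← mul_pow, ← sq, hχ₈, one_pow]

theorem isQuadraticSymbol_twoHilbertSym : IsQuadraticSymbol twoHilbertSym where
  mul_left c ha hb := by
    simp only [twoHilbertSym, padicValInt.mul ha hb, unitPart_mul ha hb, Int.cast_mul, map_mul,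
      signPairing_mul_left (χ₄_eq_one_or_neg_one (not_dvd_unitPart ha))
        (χ₄_eq_one_or_neg_one (not_dvd_unitPart hb))]
    ring
  comm a b := by
    rw [twoHilbertSym, signPairing_comm, twoHilbertSym]
    ring
  sq_eq_one ha hb := by
    rw [twoHilbertSym, mul_pow, mul_pow, signPairing_sq, pow_right_comm,
      pow_right_comm _ (padicValInt 2 _), χ₈_sq_eq_one (not_dvd_unitPart ha),
      χ₈_sq_eq_one (not_dvd_unitPart hb), one_pow, one_pow, one_mul, one_mul]
  neg_self := twoHilbertSym_neg_self

theorem twoHilbertSym_of_not_dvd {a b : ℤ} (ha : ¬ (2 : ℤ) ∣ a) (hb : ¬ (2 : ℤ) ∣ b) :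
    twoHilbertSym a b = signPairing (χ₄ a) (χ₄ b) := by
  simp [twoHilbertSym, padicValInt.eq_zero_of_not_dvd (p := 2) ha,
    padicValInt.eq_zero_of_not_dvd (p := 2) hb, unitPart_of_not_dvd (p := 2) ha,
    unitPart_of_not_dvd (p := 2) hb]

theorem twoHilbertSym_two_left {b : ℤ} (hb : ¬ (2 : ℤ) ∣ b) : twoHilbertSym 2 b = χ₈ b := by
  have hu : unitPart 2 2 = 1 := unitPart_self (p := 2)
  have hv : padicValInt 2 2 = 1 := padicValInt_self (p := 2)
  simp [twoHilbertSym, hu, hv, padicValInt.eq_zero_of_not_dvd (p := 2) hb,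
    unitPart_of_not_dvd (p := 2) hb, signPairing]

theorem twoHilbertSym_two_mul {a b : ℤ} (ha : ¬ (2 : ℤ) ∣ a) (hb : ¬ (2 : ℤ) ∣ b) :
    twoHilbertSym (2 * a) b = χ₈ b * signPairing (χ₄ a) (χ₄ b) := by
  have ha0 : a ≠ 0 := by
    rintro rfl
    simp at ha
  rw [isQuadraticSymbol_twoHilbertSym.mul_left _ two_ne_zero ha0, twoHilbertSym_of_not_dvd ha hb,
    twoHilbertSym_two_left hb]

end TwoSymbol

end Symbol

section SymbolSolvable

/-- The symbol `H` does not obstruct the solvability of `x² = a y² + b z²` over `K`. -/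
def TrivialIfSolvable (K : Type*) [Field K] (H : ℤ → ℤ → ℤ) (a b : ℤ) : Prop :=
  HilbertSolvable (a : K) b → H a b = 1

namespace TrivialIfSolvable

variable {K : Type*} [Field K] {H : ℤ → ℤ → ℤ} {a b c : ℤ}

theorem symm (hH : IsQuadraticSymbol H) (h : TrivialIfSolvable K H a b) :
    TrivialIfSolvable K H b a := fun hs => by
  rw [hH.comm, h hs.symm]

variable [CharZero K]

theorem sq_mul_right (hH : IsQuadraticSymbol H) (hc : c ≠ 0) (ha : a ≠ 0) (hb : b ≠ 0)
    (h : TrivialIfSolvable K H a b) : TrivialIfSolvable K H a (c ^ 2 * b) := fun hs => by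
  push_cast at hs
  rw [HilbertSolvable.congr_right (.sq_mul (Int.cast_ne_zero.2 hc) _)] at hs
  rw [hH.comm, hH.sq_mul_left hc hb ha, hH.comm, h hs]

theorem of_neg_mul_right (hH : IsQuadraticSymbol H) (ha : a ≠ 0) (hb : b ≠ 0)
    (h : TrivialIfSolvable K H a (-(a * b))) : TrivialIfSolvable K H a b := fun hs => by
  rw [← hH.neg_mul_right ha hb]
  exact h (by exact_mod_cast hs.neg_mul_right (Int.cast_ne_zero.2 ha))

/-- The case of two entries of valuation one is reduced to the others by replacing `p v` with
`-(p u) (p v)`, a square times a unit. -/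
theorem of_not_dvd {p : ℕ} [hp : Fact p.Prime] (hH : IsQuadraticSymbol H)
    (hunit : ∀ {u v : ℤ}, ¬ (p : ℤ) ∣ u → ¬ (p : ℤ) ∣ v → TrivialIfSolvable K H u v)
    (hunif : ∀ {u v : ℤ}, ¬ (p : ℤ) ∣ u → ¬ (p : ℤ) ∣ v → TrivialIfSolvable K H (p * u) v)
    (ha : a ≠ 0) (hb : b ≠ 0) : TrivialIfSolvable K H a b := by
  have hp0 : (p : ℤ) ≠ 0 := Int.natCast_ne_zero.2 hp.out.ne_zero
  have ne_zero : ∀ {u : ℤ}, ¬ (p : ℤ) ∣ u → u ≠ 0 := by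
    rintro u hu rfl
    exact hu (dvd_zero _)
  have hunif₂ : ∀ {u v : ℤ}, ¬ (p : ℤ) ∣ u → ¬ (p : ℤ) ∣ v →
      TrivialIfSolvable K H (p * u) (p * v) := by
    intro u v hu hv
    have huv : ¬ (p : ℤ) ∣ -(u * v) := by
      rw [dvd_neg, (Nat.prime_iff_prime_int.1 hp.out).dvd_mul]
      exact not_or.2 ⟨hu, hv⟩
    have hpu := mul_ne_zero hp0 (ne_zero hu)
    refine of_neg_mul_right hH hpu (mul_ne_zero hp0 (ne_zero hv)) ?_
    rw [show -(p * u * (p * v)) = (p : ℤ) ^ 2 * -(u * v) by ring]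
    exact sq_mul_right hH hp0 hpu (ne_zero huv) (hunif hu huv)
  have hright : ∀ {a : ℤ}, a ≠ 0 → (∀ {v : ℤ}, ¬ (p : ℤ) ∣ v → TrivialIfSolvable K H a v) →
      (∀ {v : ℤ}, ¬ (p : ℤ) ∣ v → TrivialIfSolvable K H a (p * v)) →
      ∀ {b : ℤ}, b ≠ 0 → TrivialIfSolvable K H a b := by
    intro a ha h₀ h₁ b hb
    obtain ⟨d, v, hd, hv, rfl | rfl⟩ := exists_eq_sq_mul_not_dvd p hb
    · exact sq_mul_right hH hd ha (ne_zero hv) (h₀ hv)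
    · exact sq_mul_right hH hd ha (mul_ne_zero hp0 (ne_zero hv)) (h₁ hv)
  refine hright ha (fun hv => symm hH ?_) (fun hv => symm hH ?_) hb
  · exact hright (ne_zero hv) (fun hu => hunit hv hu) (fun hu => symm hH (hunif hu hv)) ha
  · exact hright (mul_ne_zero hp0 (ne_zero hv)) (fun hu => hunif hv hu) (fun hu => hunif₂ hv hu) ha

end TrivialIfSolvable

theorem realHilbertSym_eq_one_of_hilbertSolvable {a b : ℤ} (h : HilbertSolvable (a : ℝ) b) :
    realHilbertSym a b = 1 := by
  refine if_neg fun ⟨ha, hb⟩ => ?_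
  rw [Int.sign_eq_neg_one_iff_neg] at ha hb
  have ha : (a : ℝ) < 0 := Int.cast_lt_zero.2 ha
  have hb : (b : ℝ) < 0 := Int.cast_lt_zero.2 hb
  obtain ⟨x, y, z, hxyz, h⟩ := h
  have hy := mul_nonpos_of_nonpos_of_nonneg ha.le (sq_nonneg y)
  have hz := mul_nonpos_of_nonpos_of_nonneg hb.le (sq_nonneg z)
  have hx0 : x ^ 2 = 0 := by linarith [sq_nonneg x]
  have hy0 : a * y ^ 2 = 0 := by linarith
  have hz0 : b * z ^ 2 = 0 := by linarith
  rw [mul_eq_zero_iff_left ha.ne, sq_eq_zero_iff] at hy0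
  rw [mul_eq_zero_iff_left hb.ne, sq_eq_zero_iff] at hz0
  rw [sq_eq_zero_iff] at hx0
  tauto

theorem oddHilbertSym_eq_one_of_hilbertSolvable {p : ℕ} [hp : Fact p.Prime] {a b : ℤ} (ha : a ≠ 0)
    (hb : b ≠ 0) (h : HilbertSolvable (a : ℚ_[p]) b) : oddHilbertSym p a b = 1 := by
  revert h
  refine TrivialIfSolvable.of_not_dvd (p := p) isQuadraticSymbol_oddHilbertSym
    (fun hu hv _ => oddHilbertSym_of_not_dvd hu hv) (fun {u v} hu hv h => ?_) ha hb
  have hpu : ¬ (p : ℤ) ^ 2 ∣ p * u := by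
    rwa [sq, mul_dvd_mul_iff_left (Int.natCast_ne_zero.2 hp.out.ne_zero)]
  rw [oddHilbertSym_mul_of_not_dvd hu hv, ← jacobiSym.legendreSym.to_jacobiSym,
    legendreSym.eq_one_iff p ((ZMod.intCast_zmod_eq_zero_iff_dvd v p).not.2 hv)]
  exact h.symm.isSquare_zmod (dvd_mul_right _ _) hpu

theorem HilbertSolvable.exists_zmod_two_pow (n : ℕ) {a b : ℤ} (h : HilbertSolvable (a : ℚ_[2]) b) :
    ∃ x y z : ZMod (2 ^ n), (IsUnit x ∨ IsUnit y ∨ IsUnit z) ∧ x ^ 2 = a * y ^ 2 + b * z ^ 2 := by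
  obtain ⟨x, y, z, hunit, h⟩ := h.exists_primitive
  let φ := PadicInt.toZModPow (p := 2) n
  exact ⟨φ x, φ y, φ z, hunit.imp (·.map φ) (Or.imp (·.map φ) (·.map φ)),
    by simpa using congrArg φ h⟩

theorem sq_eq_one_of_isUnit_zmod_four {w : ZMod 4} (hw : IsUnit w) : w ^ 2 = 1 := by
  obtain ⟨w, rfl⟩ := hw
  decide +revert

theorem sq_eq_one_of_isUnit_zmod_eight {w : ZMod 8} (hw : IsUnit w) : w ^ 2 = 1 := by
  obtain ⟨w, rfl⟩ := hw
  decide +revert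

theorem isUnit_intCast_zmod_eight {a : ℤ} (ha : ¬ (2 : ℤ) ∣ a) : IsUnit (a : ZMod 8) := by
  have hcop : IsCoprime a 2 := (Int.prime_two.coprime_iff_not_dvd.2 ha).symm
  rw [ZMod.coe_int_isUnit_iff_isCoprime]
  exact (hcop.pow_right (n := 3)).symm

theorem signPairing_χ₄_eq_one_of_hilbertSolvable {a b : ℤ}
    (h : HilbertSolvable (a : ℚ_[2]) b) : signPairing (χ₄ a) (χ₄ b) = 1 := by
  have eq_three : ∀ c : ZMod 4, χ₄ c = -1 → c = 3 := by decide
  have key : ∀ x y z : ZMod 4, x ^ 2 = 3 * y ^ 2 + 3 * z ^ 2 →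
      x ^ 2 ≠ 1 ∧ y ^ 2 ≠ 1 ∧ z ^ 2 ≠ 1 := by
    decide
  refine if_neg fun ⟨ha, hb⟩ => ?_
  obtain ⟨x, y, z, hunit, h⟩ := h.exists_zmod_two_pow 2
  change (ZMod 4) at x y z
  rw [eq_three _ ha, eq_three _ hb] at h
  have := key x y z h
  have := hunit.imp sq_eq_one_of_isUnit_zmod_four
    (Or.imp sq_eq_one_of_isUnit_zmod_four sq_eq_one_of_isUnit_zmod_four)
  tauto

theorem χ₈_mul_signPairing_eq_one_of_hilbertSolvable {a b : ℤ} (ha : ¬ (2 : ℤ) ∣ a)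
    (hb : ¬ (2 : ℤ) ∣ b) (h : HilbertSolvable ((2 * a : ℤ) : ℚ_[2]) b) :
    χ₈ b * signPairing (χ₄ a) (χ₄ b) = 1 := by
  have sq_eq : ∀ w : ZMod 8, w ^ 2 ∈ ({0, 1, 4} : Finset (ZMod 8)) := by decide
  have key : ∀ a b : ZMod 8, a ^ 2 = 1 → b ^ 2 = 1 → ∀ X ∈ ({0, 1, 4} : Finset (ZMod 8)),
      ∀ Y ∈ ({0, 1, 4} : Finset (ZMod 8)), ∀ Z ∈ ({0, 1, 4} : Finset (ZMod 8)),
      X = 1 ∨ Y = 1 ∨ Z = 1 → X = 2 * a * Y + b * Z →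
      χ₈ b * signPairing (χ₄ a.cast) (χ₄ b.cast) = 1 := by
    decide
  obtain ⟨x, y, z, hunit, h⟩ := h.exists_zmod_two_pow 3
  change (ZMod 8) at x y z
  push_cast at h
  have hsq := hunit.imp sq_eq_one_of_isUnit_zmod_eight
    (Or.imp sq_eq_one_of_isUnit_zmod_eight sq_eq_one_of_isUnit_zmod_eight)
  have := key a b (sq_eq_one_of_isUnit_zmod_eight (isUnit_intCast_zmod_eight ha))
    (sq_eq_one_of_isUnit_zmod_eight (isUnit_intCast_zmod_eight hb)) _ (sq_eq x) _ (sq_eq y) _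
    (sq_eq z) hsq h
  rwa [ZMod.cast_intCast (by decide : 4 ∣ 8), ZMod.cast_intCast (by decide : 4 ∣ 8)] at this

theorem twoHilbertSym_eq_one_of_hilbertSolvable {a b : ℤ} (ha : a ≠ 0) (hb : b ≠ 0)
    (h : HilbertSolvable (a : ℚ_[2]) b) : twoHilbertSym a b = 1 := by
  revert h
  refine TrivialIfSolvable.of_not_dvd (p := 2) isQuadraticSymbol_twoHilbertSym
    (fun hu hv h => ?_) (fun hu hv h => ?_) ha hb
  · rw [twoHilbertSym_of_not_dvd hu hv]
    exact signPairing_χ₄_eq_one_of_hilbertSolvable h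
  · rw [Nat.cast_ofNat, twoHilbertSym_two_mul hu hv]
    exact χ₈_mul_signPairing_eq_one_of_hilbertSolvable hu hv h

end SymbolSolvable

section ProductFormula

/-- The Hilbert symbol of `ℚ_[p]`. -/
def localHilbertSym (p : ℕ) : ℤ → ℤ → ℤ :=
  if p = 2 then twoHilbertSym else oddHilbertSym p

theorem localHilbertSym_two : localHilbertSym 2 = twoHilbertSym :=
  if_pos rfl

theorem localHilbertSym_of_ne_two {p : ℕ} (hp2 : p ≠ 2) : localHilbertSym p = oddHilbertSym p :=
  if_neg hp2

theorem isQuadraticSymbol_localHilbertSym {p : ℕ} (hp : p.Prime) :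
    IsQuadraticSymbol (localHilbertSym p) := by
  have : Fact p.Prime := ⟨hp⟩
  unfold localHilbertSym
  split_ifs
  · exact isQuadraticSymbol_twoHilbertSym
  · exact isQuadraticSymbol_oddHilbertSym

theorem localHilbertSym_eq_one_of_hilbertSolvable {p : ℕ} [Fact p.Prime] {a b : ℤ} (ha : a ≠ 0)
    (hb : b ≠ 0) (h : HilbertSolvable (a : ℚ_[p]) b) : localHilbertSym p a b = 1 := by
  by_cases hp2 : p = 2
  · subst hp2
    rw [localHilbertSym_two, twoHilbertSym_eq_one_of_hilbertSolvable ha hb h]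
  · rw [localHilbertSym_of_ne_two hp2, oddHilbertSym_eq_one_of_hilbertSolvable ha hb h]

/-- All prime divisors of `a` lie in `S`, that is, `a` is an `S`-unit. -/
def SupportedOn (S : Finset ℕ) (a : ℤ) : Prop :=
  ∀ p : ℕ, p.Prime → (p : ℤ) ∣ a → p ∈ S

namespace SupportedOn

variable {S T : Finset ℕ} {a b : ℤ}

theorem ne_zero (h : SupportedOn S a) : a ≠ 0 := by
  rintro rfl
  exact Nat.infinite_setOfPred_prime (S.finite_toSet.subset fun p hp => h p hp (dvd_zero _))

theorem mul (ha : SupportedOn S a) (hb : SupportedOn S b) : SupportedOn S (a * b) :=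
  fun p hp h => ((Nat.prime_iff_prime_int.1 hp).dvd_mul.1 h).elim (ha p hp) (hb p hp)

theorem neg (ha : SupportedOn S a) : SupportedOn S (-a) :=
  fun p hp h => ha p hp ((dvd_neg).1 h)

theorem mono (hST : S ⊆ T) (ha : SupportedOn S a) : SupportedOn T a :=
  fun p hp h => hST (ha p hp h)

theorem of_dvd (ha : SupportedOn S a) (hba : b ∣ a) : SupportedOn S b :=
  fun p hp h => ha p hp (h.trans hba)

theorem of_prime_mem {q : ℕ} (hq : q.Prime) (hqS : q ∈ S) : SupportedOn S q := fun p hp h => by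
  rwa [(Nat.prime_dvd_prime_iff_eq hp hq).1 (Int.natCast_dvd_natCast.1 h)]

theorem induction {P : ℤ → Prop} (neg_one : P (-1)) (prime : ∀ p ∈ S, P p)
    (mul : ∀ a b : ℤ, a ≠ 0 → b ≠ 0 → P a → P b → P (a * b)) (ha : SupportedOn S a) : P a := by
  have one : P 1 := by simpa using mul (-1) (-1) (by decide) (by decide) neg_one neg_one
  have nat : ∀ n : ℕ, SupportedOn S n → P n := fun n hn => by
    induction n using induction_on_primes with
    | zero => exact absurd rfl hn.ne_zero
    | one => exact one
    | prime_mul p m hp ih =>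
      rw [Nat.cast_mul] at hn ⊢
      have hm : SupportedOn S m := hn.of_dvd (dvd_mul_left _ _)
      exact mul _ _ (Int.natCast_ne_zero.2 hp.ne_zero) hm.ne_zero
        (prime p (hn p hp (dvd_mul_right _ _))) (ih hm)
  obtain ⟨n, rfl | rfl⟩ := Int.eq_nat_or_neg a
  · exact nat n ha
  · rw [neg_eq_neg_one_mul]
    have hn : SupportedOn S n := by simpa using ha.neg
    exact mul _ _ (by decide) hn.ne_zero neg_one (nat n hn)

end SupportedOn

theorem not_natCast_dvd_natCast_of_prime {p q : ℕ} (hp : p.Prime) (hq : q.Prime) (hpq : p ≠ q) :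
    ¬ (p : ℤ) ∣ q := fun h =>
  hpq ((Nat.prime_dvd_prime_iff_eq hp hq).1 (Int.natCast_dvd_natCast.1 h))

theorem oddHilbertSym_prime_left {p : ℕ} [hp : Fact p.Prime] {b : ℤ} (hb : ¬ (p : ℤ) ∣ b) :
    oddHilbertSym p p b = J(b | p) := by
  simpa using oddHilbertSym_mul_of_not_dvd (Nat.prime_iff_prime_int.1 hp.out).not_dvd_one hb

theorem realHilbertSym_of_pos {a : ℤ} (ha : 0 < a) (b : ℤ) : realHilbertSym a b = 1 := by
  simp [realHilbertSym, signPairing, Int.sign_eq_one_of_pos ha]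

/-- The product of the Hilbert symbols of `ℝ` and of `ℚ_[p]` for `p ∈ S`. -/
def hilbertSymProd (S : Finset ℕ) (a b : ℤ) : ℤ :=
  realHilbertSym a b * ∏ p ∈ S, localHilbertSym p a b

section

variable {S T : Finset ℕ} {a b : ℤ}

theorem isQuadraticSymbol_hilbertSymProd (hS : ∀ p ∈ S, p.Prime) :
    IsQuadraticSymbol (hilbertSymProd S) :=
  isQuadraticSymbol_realHilbertSym.mul
    (.prod fun p hp => isQuadraticSymbol_localHilbertSym (hS p hp))

theorem hilbertSymProd_eq_of_supportedOn (hS : ∀ p ∈ S, p.Prime) (hTS : T ⊆ S) (h2 : 2 ∈ T)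
    (ha : SupportedOn T a) (hb : SupportedOn T b) :
    hilbertSymProd S a b = hilbertSymProd T a b := by
  refine congrArg _ (Finset.prod_subset hTS fun p hp hpT => ?_).symm
  rw [localHilbertSym_of_ne_two (ne_of_mem_of_not_mem h2 hpT).symm]
  exact oddHilbertSym_of_not_dvd (mt (ha p (hS p hp)) hpT) (mt (hb p (hS p hp)) hpT)

theorem supportedOn_neg_one : SupportedOn S (-1) := fun _ hp h =>
  absurd ((dvd_neg).1 h) (Nat.prime_iff_prime_int.1 hp).not_dvd_one

theorem hilbertSymProd_neg_one_neg_one (hS : ∀ p ∈ S, p.Prime) (h2 : 2 ∈ S) :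
    hilbertSymProd S (-1) (-1) = 1 := by
  rw [hilbertSymProd_eq_of_supportedOn (T := {2}) hS (by simpa) (by simp) supportedOn_neg_one
    supportedOn_neg_one, hilbertSymProd, Finset.prod_singleton, localHilbertSym_two,
    twoHilbertSym_of_not_dvd (by decide) (by decide)]
  decide

theorem supportedOn_two (h2 : 2 ∈ S) : SupportedOn S 2 := by
  exact_mod_cast SupportedOn.of_prime_mem Nat.prime_two h2

theorem hilbertSymProd_two_neg_one (hS : ∀ p ∈ S, p.Prime) (h2 : 2 ∈ S) :
    hilbertSymProd S 2 (-1) = 1 := by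
  rw [hilbertSymProd_eq_of_supportedOn (T := {2}) hS (by simpa) (by simp)
    (supportedOn_two (by simp)) supportedOn_neg_one, hilbertSymProd, Finset.prod_singleton,
    localHilbertSym_two, twoHilbertSym_two_left (by decide)]
  decide

theorem hilbertSymProd_odd_prime_left (hS : ∀ p ∈ S, p.Prime) (h2 : 2 ∈ S) {l : ℕ} (hl : l ∈ S)
    (hl2 : l ≠ 2) (hb : SupportedOn {2} b) :
    hilbertSymProd S l b = twoHilbertSym l b * J(b | l) := by
  have : Fact l.Prime := ⟨hS l hl⟩
  have hlb : ¬ (l : ℤ) ∣ b := fun h => hl2 (Finset.mem_singleton.1 (hb l this.out h))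
  rw [hilbertSymProd_eq_of_supportedOn (T := {2, l}) hS (by simp [Finset.insert_subset_iff, *])
    (by simp) (.of_prime_mem this.out (by simp)) (hb.mono (by simp)), hilbertSymProd,
    Finset.prod_pair hl2.symm, localHilbertSym_two, localHilbertSym_of_ne_two hl2,
    realHilbertSym_of_pos (by exact_mod_cast this.out.pos), one_mul, oddHilbertSym_prime_left hlb]

theorem χ₄_sq_eq_one {a : ℤ} (ha : ¬ (2 : ℤ) ∣ a) : χ₄ a ^ 2 = 1 :=
  sq_eq_one_iff.2 (χ₄_eq_one_or_neg_one ha)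

theorem hilbertSymProd_odd_prime_neg_one (hS : ∀ p ∈ S, p.Prime) (h2 : 2 ∈ S) {l : ℕ} (hl : l ∈ S)
    (hl2 : l ≠ 2) : hilbertSymProd S l (-1) = 1 := by
  have h2l := not_natCast_dvd_natCast_of_prime Nat.prime_two (hS l hl) hl2.symm
  have hpair : signPairing (χ₄ (l : ℤ)) (χ₄ ((-1 : ℤ) : ZMod 4)) = χ₄ (l : ℤ) := by
    rcases χ₄_eq_one_or_neg_one h2l with h | h <;> rw [h] <;> decide
  rw [hilbertSymProd_odd_prime_left hS h2 hl hl2 supportedOn_neg_one,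
    twoHilbertSym_of_not_dvd h2l (by decide), jacobiSym.at_neg_one ((hS l hl).odd_of_ne_two hl2),
    hpair, Int.cast_natCast, ← sq]
  exact_mod_cast χ₄_sq_eq_one h2l

theorem hilbertSymProd_odd_prime_two (hS : ∀ p ∈ S, p.Prime) (h2 : 2 ∈ S) {l : ℕ} (hl : l ∈ S)
    (hl2 : l ≠ 2) : hilbertSymProd S l 2 = 1 := by
  have h2l := not_natCast_dvd_natCast_of_prime Nat.prime_two (hS l hl) hl2.symm
  rw [hilbertSymProd_odd_prime_left hS h2 hl hl2 (supportedOn_two (by simp)),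
    isQuadraticSymbol_twoHilbertSym.comm, twoHilbertSym_two_left h2l,
    jacobiSym.at_two ((hS l hl).odd_of_ne_two hl2), Int.cast_natCast, ← sq]
  exact_mod_cast χ₈_sq_eq_one h2l

theorem signPairing_mul_jacobiSym_mul_jacobiSym {l m : ℕ} (hl : Odd l) (hm : Odd m)
    (hlm : l.Coprime m) : signPairing (χ₄ (l : ℤ)) (χ₄ (m : ℤ)) * J(m | l) * J(l | m) = 1 := by
  have χ₄_eq_neg_one : ∀ {n : ℕ}, Odd n → (χ₄ (n : ℤ) = -1 ↔ n % 4 = 3) := fun {n} hn => by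
    rw [Int.cast_natCast, ZMod.χ₄_nat_eq_if_mod_four, if_neg (Nat.odd_iff.1 hn ▸ one_ne_zero)]
    have := Nat.odd_mod_four_iff.1 (Nat.odd_iff.1 hn)
    split_ifs <;> simp <;> omega
  have hrec : J(m | l) = signPairing (χ₄ (l : ℤ)) (χ₄ (m : ℤ)) * J(l | m) := by
    rw [← jacobiSym.quadratic_reciprocity_if (Nat.odd_iff.1 hm) (Nat.odd_iff.1 hl)]
    simp only [signPairing, χ₄_eq_neg_one hl, χ₄_eq_neg_one hm, ite_mul, neg_one_mul, one_mul,
      and_comm]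
  have hsq : J(l | m) ^ 2 = 1 := jacobiSym.sq_one hlm
  rw [hrec, ← mul_assoc, ← sq, signPairing_sq, one_mul, ← sq, hsq]

theorem hilbertSymProd_odd_prime_odd_prime (hS : ∀ p ∈ S, p.Prime) (h2 : 2 ∈ S) {l m : ℕ}
    (hl : l ∈ S) (hm : m ∈ S) (hl2 : l ≠ 2) (hm2 : m ≠ 2) (hlm : l ≠ m) :
    hilbertSymProd S l m = 1 := by
  have hlp : Fact l.Prime := ⟨hS l hl⟩
  have hmp : Fact m.Prime := ⟨hS m hm⟩
  have not_dvd : ∀ {p q : ℕ}, p.Prime → q.Prime → p ≠ q → ¬ (p : ℤ) ∣ q :=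
    not_natCast_dvd_natCast_of_prime
  rw [hilbertSymProd_eq_of_supportedOn (T := {2, l, m}) hS (by simp [Finset.insert_subset_iff, *])
    (by simp) (.of_prime_mem hlp.out (by simp)) (.of_prime_mem hmp.out (by simp)), hilbertSymProd,
    Finset.prod_insert (by simp [hl2.symm, hm2.symm]), Finset.prod_pair hlm, localHilbertSym_two,
    localHilbertSym_of_ne_two hl2, localHilbertSym_of_ne_two hm2,
    realHilbertSym_of_pos (by exact_mod_cast hlp.out.pos), one_mul,
    twoHilbertSym_of_not_dvd (not_dvd Nat.prime_two hlp.out hl2.symm)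
      (not_dvd Nat.prime_two hmp.out hm2.symm),
    oddHilbertSym_prime_left (not_dvd hlp.out hmp.out hlm), isQuadraticSymbol_oddHilbertSym.comm,
    oddHilbertSym_prime_left (not_dvd hmp.out hlp.out hlm.symm), ← mul_assoc]
  exact signPairing_mul_jacobiSym_mul_jacobiSym (hlp.out.odd_of_ne_two hl2)
    (hmp.out.odd_of_ne_two hm2) ((Nat.coprime_primes hlp.out hmp.out).2 hlm)

theorem hilbertSymProd_prime_neg_one (hS : ∀ p ∈ S, p.Prime) (h2 : 2 ∈ S) {l : ℕ} (hl : l ∈ S) :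
    hilbertSymProd S l (-1) = 1 := by
  rcases eq_or_ne l 2 with rfl | hl2
  · exact hilbertSymProd_two_neg_one hS h2
  · exact hilbertSymProd_odd_prime_neg_one hS h2 hl hl2

theorem hilbertSymProd_prime_prime (hS : ∀ p ∈ S, p.Prime) (h2 : 2 ∈ S) {l m : ℕ} (hl : l ∈ S)
    (hm : m ∈ S) : hilbertSymProd S l m = 1 := by
  have hH := isQuadraticSymbol_hilbertSymProd hS
  rcases eq_or_ne l m with rfl | hlm
  · rw [hH.self_eq_neg_one (Int.natCast_ne_zero.2 (hS l hl).ne_zero),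
      hilbertSymProd_prime_neg_one hS h2 hl]
  rcases eq_or_ne m 2 with rfl | hm2
  · exact hilbertSymProd_odd_prime_two hS h2 hl hlm
  rcases eq_or_ne l 2 with rfl | hl2
  · rw [hH.comm]
    exact hilbertSymProd_odd_prime_two hS h2 hm hm2
  · exact hilbertSymProd_odd_prime_odd_prime hS h2 hl hm hl2 hm2 hlm

theorem hilbertSymProd_eq_one (hS : ∀ p ∈ S, p.Prime) (h2 : 2 ∈ S) (ha : SupportedOn S a)
    (hb : SupportedOn S b) : hilbertSymProd S a b = 1 := by
  have hH := isQuadraticSymbol_hilbertSymProd hS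
  have right : ∀ c : ℤ, hilbertSymProd S c (-1) = 1 → (∀ l ∈ S, hilbertSymProd S c l = 1) →
      hilbertSymProd S c b = 1 := fun c hneg hprime =>
    hb.induction (P := fun b => hilbertSymProd S c b = 1) hneg hprime
      fun a b ha hb h₁ h₂ => by rw [hH.mul_right c ha hb, h₁, h₂, one_mul]
  refine ha.induction (P := fun a => hilbertSymProd S a b = 1) ?_ ?_
    fun a c ha hc h₁ h₂ => by rw [hH.mul_left b ha hc, h₁, h₂, one_mul]
  · refine right _ (hilbertSymProd_neg_one_neg_one hS h2) fun l hl => ?_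
    rw [hH.comm, hilbertSymProd_prime_neg_one hS h2 hl]
  · exact fun l hl => right _ (hilbertSymProd_prime_neg_one hS h2 hl)
      fun m hm => hilbertSymProd_prime_prime hS h2 hl hm

theorem hilbertSolvable_of_forall_mem {q : ℕ} [hq : Fact q.Prime] (hS : ∀ p ∈ S, p.Prime)
    (h2 : 2 ∈ S) (hqS : q ∉ S) (ha : SupportedOn S a) (hb : SupportedOn S b)
    (hR : HilbertSolvable (a : ℝ) (q * b : ℤ))
    (hloc : ∀ p ∈ S, ∀ [Fact p.Prime], HilbertSolvable (a : ℚ_[p]) (q * b : ℤ)) :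
    HilbertSolvable (a : ℚ_[q]) (q * b : ℤ) := by
  have hqa : ¬ (q : ℤ) ∣ a := mt (ha q hq.out) hqS
  have hqb : ¬ (q : ℤ) ∣ b := mt (hb q hq.out) hqS
  have hqb0 : q * b ≠ 0 := mul_ne_zero (Int.natCast_ne_zero.2 hq.out.ne_zero) hb.ne_zero
  have hq2 : q ≠ 2 := (ne_of_mem_of_not_mem h2 hqS).symm
  have hprod : hilbertSymProd (insert q S) a (q * b) = 1 :=
    hilbertSymProd_eq_one (by simpa [hq.out] using hS) (Finset.mem_insert_of_mem h2)
      (ha.mono (Finset.subset_insert q S))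
      ((SupportedOn.of_prime_mem hq.out (Finset.mem_insert_self q S)).mul
        (hb.mono (Finset.subset_insert q S)))
  have hSprod : ∏ p ∈ S, localHilbertSym p a (q * b) = 1 := Finset.prod_eq_one fun p hp =>
    have : Fact p.Prime := ⟨hS p hp⟩
    localHilbertSym_eq_one_of_hilbertSolvable ha.ne_zero hqb0 (hloc p hp)
  rw [hilbertSymProd, Finset.prod_insert hqS, hSprod, mul_one, localHilbertSym_of_ne_two hq2,
    realHilbertSym_eq_one_of_hilbertSolvable hR, one_mul, isQuadraticSymbol_oddHilbertSym.comm,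
    oddHilbertSym_mul_of_not_dvd hqb hqa, ← jacobiSym.legendreSym.to_jacobiSym,
    legendreSym.eq_one_iff q ((ZMod.intCast_zmod_eq_zero_iff_dvd a q).not.2 hqa)] at hprod
  exact .of_isSquare (isSquare_intCast_of_isSquare_zmod hq2 hqa hprod) _

theorem everywhereLocally_hilbertSolvable_of_forall_mem {q : ℕ} (hq : q.Prime)
    (hS : ∀ p ∈ S, p.Prime) (h2 : 2 ∈ S) (hqS : q ∉ S) (ha : SupportedOn S a)
    (hb : SupportedOn S b) (hR : HilbertSolvable (a : ℝ) (q * b : ℤ))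
    (hloc : ∀ p ∈ S, ∀ [Fact p.Prime], HilbertSolvable (a : ℚ_[p]) (q * b : ℤ)) :
    EverywhereLocally fun K _ => HilbertSolvable (a : K) (q * b : ℤ) := by
  refine ⟨hR, fun p hp => ?_⟩
  by_cases hpS : p ∈ S
  · exact hloc p hpS
  rcases eq_or_ne p q with rfl | hpq
  · exact hilbertSolvable_of_forall_mem hS h2 hqS ha hb hR hloc
  refine .of_not_dvd (ne_of_mem_of_not_mem h2 hpS).symm (mt (ha p hp.out) hpS) ?_
  rw [(Nat.prime_iff_prime_int.1 hp.out).dvd_mul]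
  exact not_or.2 ⟨not_natCast_dvd_natCast_of_prime hp.out hq hpq, mt (hb p hp.out) hpS⟩

end

end ProductFormula

section Approximation

theorem sameSquareClass_inv {K : Type*} [Field K] {a : K} (ha : a ≠ 0) :
    SameSquareClass a a⁻¹ :=
  ⟨a, ha, by field_simp⟩

theorem padicNorm_natCast_sub_le_of_modEq_appr {p : ℕ} [Fact p.Prime] (x : ℤ_[p]) {r N : ℕ}
    (hr : r ≡ x.appr N [MOD p ^ N]) : ‖(r : ℚ_[p]) - x‖ ≤ (p : ℝ) ^ (-N : ℤ) := by
  have hdvd : (p : ℤ_[p]) ^ N ∣ r - x.appr N := by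
    exact_mod_cast Int.cast_dvd_cast (α := ℤ_[p]) _ _ (Nat.modEq_iff_dvd.1 hr.symm)
  have happr : (p : ℤ_[p]) ^ N ∣ x.appr N - x :=
    (dvd_sub_comm).1 (Ideal.mem_span_singleton.1 (PadicInt.appr_spec N x))
  have := dvd_add hdvd happr
  rw [sub_add_sub_cancel] at this
  rw [← PadicInt.coe_natCast, ← PadicInt.coe_sub, PadicInt.padic_norm_e_of_padicInt]
  rwa [PadicInt.norm_le_pow_iff_mem_span_pow, Ideal.mem_span_singleton]

theorem exists_forall_modEq_sameSquareClass {p : ℕ} [hp : Fact p.Prime] {t : ℚ_[p]} (ht : t ≠ 0) :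
    ∃ m N : ℕ, ∀ r : ℕ, r ≡ m [MOD p ^ N] → SameSquareClass (r : ℚ_[p]) t := by
  wlog ht1 : ‖t‖ ≤ 1 generalizing t
  · have hinv : ‖t⁻¹‖ ≤ 1 := by
      rw [norm_inv]
      exact inv_le_one_of_one_le₀ (not_le.1 ht1).le
    obtain ⟨m, N, h⟩ := this (inv_ne_zero ht) hinv
    exact ⟨m, N, fun r hr => (h r hr).trans (sameSquareClass_inv ht).symm⟩
  obtain ⟨N, hN⟩ := PadicInt.exists_pow_neg_lt p (ε := ‖(2 : ℚ_[p])‖ ^ 2 * ‖t‖)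
    (mul_pos (pow_pos (norm_pos_iff.2 two_ne_zero) 2) (norm_pos_iff.2 ht))
  exact ⟨PadicInt.appr ⟨t, ht1⟩ N, N, fun r hr => sameSquareClass_of_norm_sub_lt
    ((padicNorm_natCast_sub_le_of_modEq_appr ⟨t, ht1⟩ hr).trans_lt hN)⟩

theorem sameSquareClass_of_mul_pos {a b : ℝ} (hab : 0 < a * b) : SameSquareClass a b := by
  have hb : b ≠ 0 := right_ne_zero_of_mul hab.ne'
  have hdiv : 0 < a / b := by
    rw [← mul_div_mul_right a b hb]
    exact div_pos hab (mul_self_pos.2 hb)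
  exact ⟨√(a / b), (Real.sqrt_pos.2 hdiv).ne', by rw [Real.sq_sqrt hdiv.le, div_mul_cancel₀ a hb]⟩

variable {S : Finset ℕ}

theorem supportedOn_prod_pow (hS : ∀ p ∈ S, p.Prime) (N : ℕ → ℕ) :
    SupportedOn S (∏ p ∈ S, p ^ N p : ℕ) := fun q hq h => by
  obtain ⟨p, hp, hqp⟩ := (hq.prime.dvd_finsetProd_iff _).1 (Int.natCast_dvd_natCast.1 h)
  rwa [(Nat.prime_dvd_prime_iff_eq hq (hS p hp)).1 (hq.dvd_of_dvd_pow hqp)]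

theorem exists_ne_zero_forall_modEq_prime_pow (hS : ∀ p ∈ S, p.Prime) (m N : ℕ → ℕ) :
    ∃ a ≠ 0, ∀ p ∈ S, a ≡ m p [MOD p ^ N p] := by
  have hpow : ∀ p ∈ S, p ^ N p ≠ 0 := fun p hp => pow_ne_zero _ (hS p hp).ne_zero
  obtain ⟨a, ha⟩ := Nat.chineseRemainderOfFinset m (fun p => p ^ N p) S hpow
    fun p hp q hq hpq => Nat.Coprime.pow _ _ ((Nat.coprime_primes (hS p hp) (hS q hq)).2 hpq)
  refine ⟨a + ∏ p ∈ S, p ^ N p, ?_, fun p hp => ?_⟩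
  · have := Finset.prod_ne_zero_iff.2 hpow
    omega
  · have : ∏ p ∈ S, p ^ N p ≡ 0 [MOD p ^ N p] :=
      (Nat.modEq_zero_iff_dvd).2 (Finset.dvd_prod_of_mem (fun p => p ^ N p) hp)
    exact (ha p hp).add this

theorem exists_eq_mul_supportedOn_coprime (hS : ∀ p ∈ S, p.Prime) {m : ℕ} (hm : m ≠ 0) :
    ∃ P u : ℕ, m = P * u ∧ SupportedOn S P ∧ ∀ p ∈ S, ¬ p ∣ u := by
  induction m using induction_on_primes with
  | zero => exact absurd rfl hm
  | one =>
    refine ⟨1, 1, rfl, fun p hp h => ?_, fun p hp => (hS p hp).not_dvd_one⟩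
    exact absurd h (Nat.prime_iff_prime_int.1 hp).not_dvd_one
  | prime_mul l m hl ih =>
    obtain ⟨P, u, rfl, hP, hu⟩ := ih (right_ne_zero_of_mul hm)
    by_cases hlS : l ∈ S
    · refine ⟨l * P, u, (mul_assoc _ _ _).symm, ?_, hu⟩
      rw [Nat.cast_mul]
      exact (SupportedOn.of_prime_mem hl hlS).mul hP
    · refine ⟨P, l * u, mul_left_comm _ _ _, hP, fun p hp => ?_⟩
      rw [(hS p hp).dvd_mul, Nat.prime_dvd_prime_iff_eq (hS p hp) hl]
      exact not_or.2 ⟨ne_of_mem_of_not_mem hp hlS, hu p hp⟩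

theorem exists_prime_mul_modEq (hS : ∀ p ∈ S, p.Prime) {m M : ℕ} (hm : m ≠ 0)
    (hM : SupportedOn S M) :
    ∃ q P : ℕ, q.Prime ∧ q ∉ S ∧ SupportedOn S P ∧ q * P ≡ m [MOD M] := by
  obtain ⟨P, u, rfl, hP, hu⟩ := exists_eq_mul_supportedOn_coprime hS hm
  have hcop : u.Coprime M := Nat.coprime_of_dvd fun p hp hpu hpM =>
    hu p (hM p hp (Int.natCast_dvd_natCast.2 hpM)) hpu
  obtain ⟨q, hqS, hq, hqu⟩ := Nat.forall_exists_prime_gt_and_modEq (S.sup id)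
    (by exact_mod_cast hM.ne_zero) hcop
  refine ⟨q, P, hq, fun h => (Finset.le_sup (f := id) h).not_gt hqS, hP, ?_⟩
  rw [mul_comm]
  exact hqu.mul_left P

theorem exists_prime_mul_sameSquareClass_padic (hS : ∀ p ∈ S, p.Prime)
    {t : ∀ (p : ℕ) [Fact p.Prime], ℚ_[p]} (ht : ∀ (p : ℕ) [Fact p.Prime], t p ≠ 0) :
    ∃ q P : ℕ, q.Prime ∧ q ∉ S ∧ SupportedOn S P ∧
      ∀ p ∈ S, ∀ [Fact p.Prime], SameSquareClass ((q * P : ℕ) : ℚ_[p]) (t p) := by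
  have hloc : ∀ p ∈ S, ∃ m N : ℕ, ∀ r : ℕ, r ≡ m [MOD p ^ N] →
      ∀ [Fact p.Prime], SameSquareClass (r : ℚ_[p]) (t p) := fun p hp => by
    have : Fact p.Prime := ⟨hS p hp⟩
    obtain ⟨m, N, h⟩ := exists_forall_modEq_sameSquareClass (ht p)
    exact ⟨m, N, fun r hr => h r hr⟩
  choose! m N h using hloc
  obtain ⟨a, ha0, ha⟩ := exists_ne_zero_forall_modEq_prime_pow hS m N
  obtain ⟨q, P, hq, hqS, hP, hqP⟩ := exists_prime_mul_modEq hS ha0 (supportedOn_prod_pow hS N)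
  refine ⟨q, P, hq, hqS, hP, fun p hp => h p hp _ ?_⟩
  exact (hqP.of_dvd (Finset.dvd_prod_of_mem (fun p => p ^ N p) hp)).trans (ha p hp)

theorem exists_prime_mul_sameSquareClass (hS : ∀ p ∈ S, p.Prime) {τ : ℝ} (hτ : τ ≠ 0)
    {t : ∀ (p : ℕ) [Fact p.Prime], ℚ_[p]} (ht : ∀ (p : ℕ) [Fact p.Prime], t p ≠ 0) :
    ∃ (q : ℕ) (c : ℤ), q.Prime ∧ q ∉ S ∧ SupportedOn S c ∧ SameSquareClass ((q * c : ℤ) : ℝ) τ ∧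
      ∀ p ∈ S, ∀ [Fact p.Prime], SameSquareClass ((q * c : ℤ) : ℚ_[p]) (t p) := by
  obtain ⟨ε, hε, hετ⟩ : ∃ ε : ℤ, (ε = 1 ∨ ε = -1) ∧ 0 < ε * τ := by
    rcases hτ.lt_or_gt with h | h
    · exact ⟨-1, Or.inr rfl, by simpa⟩
    · exact ⟨1, Or.inl rfl, by simpa⟩
  have hε2 : ε ^ 2 = 1 := sq_eq_one_iff.2 hε
  have hε0 : ε ≠ 0 := by rintro rfl; simp at hε2
  obtain ⟨q, P, hq, hqS, hP, hloc⟩ := exists_prime_mul_sameSquareClass_padic hS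
    (t := fun p _ => ε * t p) fun p _ => mul_ne_zero (Int.cast_ne_zero.2 hε0) (ht p)
  refine ⟨q, ε * P, hq, hqS, ?_, sameSquareClass_of_mul_pos ?_, fun p hp _ => ?_⟩
  · rcases hε with rfl | rfl
    · simpa using hP
    · simpa using hP.neg
  · have hqP : (0 : ℝ) < q * P := mul_pos (by exact_mod_cast hq.pos)
      (by exact_mod_cast Nat.pos_of_ne_zero (by exact_mod_cast hP.ne_zero))
    push_cast
    linarith [mul_pos hqP hετ]
  · have h := (hloc p hp).mul_left (ε : ℚ_[p])
    rw [← mul_assoc, ← sq, ← Int.cast_pow, hε2, Int.cast_one, one_mul] at h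
    convert h using 1
    push_cast
    ring

end Approximation

section Binary

theorem even_valuation_of_isSquare {p : ℕ} [Fact p.Prime] {x : ℚ_[p]} (h : IsSquare x) :
    Even x.valuation := by
  obtain ⟨r, rfl⟩ := h
  by_cases hr : r = 0
  · simp [hr]
  · exact ⟨_, Padic.valuation_mul hr hr⟩

theorem isSquare_of_even_factorization {n : ℕ} (h : ∀ p : ℕ, p.Prime → Even (n.factorization p)) :
    IsSquare n := by
  rcases eq_or_ne n 0 with rfl | hn
  · exact IsSquare.zero
  rw [← Nat.prod_factorization_pow_eq_self hn]
  exact Finset.prod_induction _ IsSquare (fun _ _ => IsSquare.mul) IsSquare.one fun p hp =>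
    (h p (Nat.prime_of_mem_primeFactors hp)).isSquare_pow p

theorem isSquare_of_everywhereLocally {m : ℤ}
    (h : EverywhereLocally fun K _ => IsSquare (m : K)) : IsSquare m := by
  obtain ⟨n, rfl⟩ := Int.eq_ofNat_of_zero_le (Int.cast_nonneg_iff.1 h.1.nonneg)
  rw [Int.isSquare_natCast_iff]
  refine isSquare_of_even_factorization fun p hp => ?_
  have : Fact p.Prime := ⟨hp⟩
  have hval := even_valuation_of_isSquare (h.2 p)
  rwa [Int.cast_natCast, Padic.valuation_natCast, Int.even_coe_nat,
    ← Nat.factorization_def n hp] at hval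

end Binary

section Induction

theorem diagIsotropic_intCast_ternary_iff {K : Type*} [Field K] [CharZero K] {a b c : ℤ}
    (hb : b ≠ 0) :
    DiagIsotropic ![(a : K), b, c] ↔ HilbertSolvable ((-(b * c) : ℤ) : K) (-(b * a) : ℤ) := by
  push_cast
  exact diagIsotropic_ternary_iff (Int.cast_ne_zero.2 hb)

theorem diagIsotropic_padic_of_not_dvd {p : ℕ} [Fact p.Prime] (hp2 : p ≠ 2) {n : ℕ}
    {a : Fin (n + 3) → ℤ} (ha : ∀ i, ¬ (p : ℤ) ∣ a i) :
    DiagIsotropic fun i => (a i : ℚ_[p]) := by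
  have hp : Prime (p : ℤ) := Nat.prime_iff_prime_int.1 Fact.out
  induction n with
  | zero =>
    have ha1 : a 1 ≠ 0 := fun h => ha 1 (h ▸ dvd_zero _)
    have hmul : ∀ i, ¬ (p : ℤ) ∣ -(a 1 * a i) := fun i => by
      rw [dvd_neg, hp.dvd_mul]
      exact not_or.2 ⟨ha 1, ha i⟩
    rw [← FinVec.etaExpand_eq fun i => (a i : ℚ_[p])]
    exact (diagIsotropic_intCast_ternary_iff ha1).2 (.of_not_dvd hp2 (hmul 2) (hmul 0))
  | succ n ih =>
    rw [← Matrix.cons_head_tail fun i => (a i : ℚ_[p])]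
    exact (ih fun i => ha i.succ).cons _

theorem exists_finset_forall_supportedOn {ι : Type*} [Finite ι] {a : ι → ℤ} (ha : ∀ i, a i ≠ 0) :
    ∃ S : Finset ℕ, (∀ p ∈ S, p.Prime) ∧ 2 ∈ S ∧ ∀ i, SupportedOn S (a i) := by
  cases nonempty_fintype ι
  refine ⟨insert 2 (∏ i, a i).natAbs.primeFactors, fun p hp => ?_, by simp, fun i p hp h => ?_⟩
  · rcases Finset.mem_insert.1 hp with rfl | hp
    · exact Nat.prime_two
    · exact Nat.prime_of_mem_primeFactors hp
  · refine Finset.mem_insert_of_mem (Nat.mem_primeFactors.2 ⟨hp, ?_, ?_⟩)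
    · exact Int.natCast_dvd.1 (h.trans (Finset.dvd_prod_of_mem a (Finset.mem_univ i)))
    · exact Int.natAbs_ne_zero.2 (Finset.prod_ne_zero_iff.2 fun i _ => ha i)

section

variable {S : Finset ℕ} {q : ℕ} {c : ℤ}

theorem everywhereLocally_diagIsotropic_ternary_of_forall_mem {a b : ℤ} (hq : q.Prime)
    (hS : ∀ p ∈ S, p.Prime) (h2 : 2 ∈ S) (hqS : q ∉ S) (hc : SupportedOn S c)
    (ha : SupportedOn S a) (hb : SupportedOn S b) (hR : DiagIsotropic ![((q * c : ℤ) : ℝ), a, b])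
    (hloc : ∀ p ∈ S, ∀ [Fact p.Prime], DiagIsotropic ![((q * c : ℤ) : ℚ_[p]), a, b]) :
    EverywhereLocally fun K _ => DiagIsotropic ![((q * c : ℤ) : K), a, b] := by
  have hiff : ∀ (K : Type) [Field K] [CharZero K], DiagIsotropic ![((q * c : ℤ) : K), a, b] ↔
      HilbertSolvable ((-(a * b) : ℤ) : K) (q * -(a * c) : ℤ) := fun K _ _ => by
    rw [diagIsotropic_intCast_ternary_iff ha.ne_zero, mul_neg, mul_left_comm]
  exact (everywhereLocally_hilbertSolvable_of_forall_mem hq hS h2 hqS (ha.mul hb).neg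
    (ha.mul hc).neg ((hiff ℝ).1 hR) fun p hp _ => (hiff ℚ_[p]).1 (hloc p hp)).mono
    fun K _ _ => (hiff K).2

/-- Outside `S` the form `b` is isotropic by itself if its rank is at least three, since its
coefficients are units; for rank two, reciprocity controls the place `q`. -/
theorem everywhereLocally_diagIsotropic_cons_of_forall_mem {n : ℕ} {b : Fin (n + 2) → ℤ}
    (hq : q.Prime) (hS : ∀ p ∈ S, p.Prime) (h2 : 2 ∈ S) (hqS : q ∉ S) (hc : SupportedOn S c)
    (hb : ∀ i, SupportedOn S (b i))
    (hR : DiagIsotropic (vecCons ((q * c : ℤ) : ℝ) fun i => (b i : ℝ)))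
    (hloc : ∀ p ∈ S, ∀ [Fact p.Prime],
      DiagIsotropic (vecCons ((q * c : ℤ) : ℚ_[p]) fun i => (b i : ℚ_[p]))) :
    EverywhereLocally fun K _ => DiagIsotropic (vecCons ((q * c : ℤ) : K) fun i => (b i : K)) := by
  cases n with
  | zero =>
    have eta : ∀ (K : Type) [Field K], (fun i => (b i : K)) = ![(b 0 : K), b 1] :=
      fun K _ => (FinVec.etaExpand_eq _).symm
    simp only [eta] at hR hloc ⊢
    exact everywhereLocally_diagIsotropic_ternary_of_forall_mem hq hS h2 hqS hc (hb 0) (hb 1)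
      hR hloc
  | succ n =>
    refine ⟨hR, fun p hp => ?_⟩
    by_cases hpS : p ∈ S
    · exact hloc p hpS
    exact (diagIsotropic_padic_of_not_dvd (ne_of_mem_of_not_mem h2 hpS).symm
      fun i => mt (hb i p hp.out) hpS).cons _

theorem exists_everywhereLocally_split {n : ℕ} {a b : ℤ} {c : Fin (n + 2) → ℤ} (ha : a ≠ 0)
    (hb : b ≠ 0) (hc : ∀ i, c i ≠ 0) (h : EverywhereLocally fun K _ =>
      DiagIsotropic (vecCons (a : K) (vecCons (b : K) fun i => (c i : K)))) :
    ∃ t : ℤ, t ≠ 0 ∧ (EverywhereLocally fun K _ => DiagIsotropic ![((-t : ℤ) : K), a, b]) ∧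
      EverywhereLocally fun K _ => DiagIsotropic (vecCons (t : K) fun i => (c i : K)) := by
  obtain ⟨S, hS, h2, habc⟩ := exists_finset_forall_supportedOn (a := vecCons a (vecCons b c))
    (Fin.cases ha (Fin.cases hb hc))
  have haS : SupportedOn S a := habc 0
  have hbS : SupportedOn S b := habc 1
  have hcS : ∀ i, SupportedOn S (c i) := fun i => habc i.succ.succ
  have split : ∀ (K : Type) [Field K] [CharZero K],
      DiagIsotropic (vecCons (a : K) (vecCons (b : K) fun i => (c i : K))) →
      ∃ t : K, t ≠ 0 ∧ DiagIsotropic ![-t, a, b] ∧ DiagIsotropic (vecCons t fun i => (c i : K)) :=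
    fun K _ _ => DiagIsotropic.exists_split (Int.cast_ne_zero.2 ha) (Int.cast_ne_zero.2 hb)
      (Int.cast_ne_zero.2 (hc 0))
  obtain ⟨τ, hτ, hτl, hτr⟩ := split ℝ h.1
  choose t ht htl htr using fun (p : ℕ) [Fact p.Prime] => split ℚ_[p] (h.2 p)
  obtain ⟨q, s, hq, hqS, hs, hR, hp⟩ := exists_prime_mul_sameSquareClass hS hτ ht
  have ternary : ∀ {K : Type} [Field K] {u : K}, SameSquareClass ((q * s : ℤ) : K) u →
      DiagIsotropic ![-u, a, b] → DiagIsotropic ![((q * -s : ℤ) : K), a, b] := fun hu h => by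
    rw [mul_neg, Int.cast_neg]
    exact (diagIsotropic_cons_congr hu.neg _).2 h
  refine ⟨q * s, mul_ne_zero (Int.natCast_ne_zero.2 hq.ne_zero) hs.ne_zero, ?_, ?_⟩
  · rw [← mul_neg]
    exact everywhereLocally_diagIsotropic_ternary_of_forall_mem hq hS h2 hqS hs.neg haS hbS
      (ternary hR hτl) fun p hpS _ => ternary (hp p hpS) (htl p)
  · exact everywhereLocally_diagIsotropic_cons_of_forall_mem hq hS h2 hqS hs hcS
      ((diagIsotropic_cons_congr hR _).2 hτr) fun p hpS _ =>
        (diagIsotropic_cons_congr (hp p hpS) _).2 (htr p)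

end

theorem intCast_vecCons {K : Type*} [Field K] {n : ℕ} (a : ℤ) (b : Fin n → ℤ) :
    (fun i => ((vecCons a b i : ℤ) : K)) = vecCons (a : K) fun i => (b i : K) :=
  Fin.comp_cons Int.cast a b

theorem not_diagIsotropic_empty {K : Type*} [Field K] {a : Fin 0 → K} : ¬ DiagIsotropic a :=
  fun ⟨x, hx, _⟩ => hx (Subsingleton.elim x 0)

theorem not_diagIsotropic_unary {K : Type*} [Field K] {a : Fin 1 → K} (ha : a 0 ≠ 0) :
    ¬ DiagIsotropic a := by
  rintro ⟨x, hx, h⟩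
  refine hx (funext fun i => ?_)
  simpa [ha, Subsingleton.elim i 0] using h

theorem diagIsotropic_rat_binary {a b : ℤ} (ha : a ≠ 0)
    (h : EverywhereLocally fun K _ => DiagIsotropic ![(a : K), b]) :
    DiagIsotropic ![(a : ℚ), b] := by
  have hiff : ∀ (K : Type) [Field K] [CharZero K], DiagIsotropic ![(a : K), b] ↔
      IsSquare ((-(a * b) : ℤ) : K) := fun K _ _ => by
    rw [diagIsotropic_binary_iff (Int.cast_ne_zero.2 ha)]
    push_cast
    rfl
  exact (hiff ℚ).2 (Rat.isSquare_intCast_iff.2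
    (isSquare_of_everywhereLocally (h.mono fun K _ _ => (hiff K).1)))

theorem diagIsotropic_rat_ternary {a b c : ℤ} (hb : b ≠ 0)
    (h : EverywhereLocally fun K _ => DiagIsotropic ![(a : K), b, c]) :
    DiagIsotropic ![(a : ℚ), b, c] :=
  (diagIsotropic_intCast_ternary_iff hb).2 (hilbertSolvable_rat_of_everywhereLocally
    (h.mono fun _ _ _ => (diagIsotropic_intCast_ternary_iff hb).1))

theorem diagIsotropic_rat_of_everywhereLocally : ∀ {n : ℕ} {a : Fin n → ℤ}, (∀ i, a i ≠ 0) →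
    (EverywhereLocally fun K _ => DiagIsotropic fun i => (a i : K)) →
    DiagIsotropic fun i => (a i : ℚ)
  | 0, _, _, h => absurd h.1 not_diagIsotropic_empty
  | 1, _, ha, h => absurd h.1 (not_diagIsotropic_unary (Int.cast_ne_zero.2 (ha 0)))
  | 2, a, ha, h => by
    have eta : ∀ (K : Type) [Field K], (fun i => (a i : K)) = ![(a 0 : K), a 1] :=
      fun K _ => (FinVec.etaExpand_eq _).symm
    simp only [eta] at h ⊢
    exact diagIsotropic_rat_binary (ha 0) h
  | 3, a, ha, h => by
    have eta : ∀ (K : Type) [Field K], (fun i => (a i : K)) = ![(a 0 : K), a 1, a 2] :=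
      fun K _ => (FinVec.etaExpand_eq _).symm
    simp only [eta] at h ⊢
    exact diagIsotropic_rat_ternary (ha 1) h
  | n + 4, a, ha, h => by
    obtain ⟨a₀, a₁, b, rfl⟩ : ∃ a₀ a₁ b, a = vecCons a₀ (vecCons a₁ b) :=
      ⟨a 0, a 1, fun i => a i.succ.succ, funext (Fin.cases rfl (Fin.cases rfl fun _ => rfl))⟩
    simp only [intCast_vecCons] at h ⊢
    obtain ⟨t, ht, hl, hr⟩ :=
      exists_everywhereLocally_split (ha 0) (ha 1) (fun i => ha i.succ.succ) h
    simp only [← intCast_vecCons] at hr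
    have hrat := diagIsotropic_rat_of_everywhereLocally (Fin.cases ht fun i => ha i.succ.succ) hr
    rw [intCast_vecCons] at hrat
    refine .of_split (Int.cast_ne_zero.2 ht) ?_ hrat
    exact_mod_cast diagIsotropic_rat_ternary (ha 0) hl

theorem sameSquareClass_ratCast_num_mul_den {K : Type*} [Field K] [CharZero K] (r : ℚ) :
    SameSquareClass (r : K) (r.num * r.den : ℤ) := by
  have hden : (r.den : K) ≠ 0 := Nat.cast_ne_zero.2 r.den_ne_zero
  refine ⟨(r.den : K)⁻¹, inv_ne_zero hden, ?_⟩
  rw [Rat.cast_def]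
  push_cast
  field_simp

end Induction

/-- Hasse–Minkowski principle over ℚ for diagonal quadratic forms: a nondegenerate
diagonal quadratic form over ℚ is isotropic over ℚ if and only if it is isotropic
over ℝ and over ℚ_p for every prime p. -/
theorem hasse_minkowski_diagonal
    (n : ℕ) (hn : 1 ≤ n) (a : Fin n → ℚ) (ha : ∀ i, a i ≠ 0) :
    (∃ x : Fin n → ℚ, x ≠ 0 ∧ ∑ i, a i * (x i) ^ 2 = 0) ↔
      ((∃ x : Fin n → ℝ, x ≠ 0 ∧ ∑ i, (a i : ℝ) * (x i) ^ 2 = 0) ∧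
        ∀ (p : ℕ) [Fact p.Prime],
          ∃ x : Fin n → ℚ_[p], x ≠ 0 ∧ ∑ i, (a i : ℚ_[p]) * (x i) ^ 2 = 0) := by
  change DiagIsotropic a ↔ EverywhereLocally fun K _ => DiagIsotropic fun i => (a i : K)
  constructor
  · exact fun h => ⟨h.map (Rat.castHom ℝ), fun p _ => h.map (Rat.castHom ℚ_[p])⟩
  · intro h
    have hsq : ∀ (K : Type) [Field K] [CharZero K], DiagIsotropic (fun i => (a i : K)) ↔
        DiagIsotropic fun i => (((a i).num * (a i).den : ℤ) : K) := fun K _ _ =>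
      diagIsotropic_congr fun i => sameSquareClass_ratCast_num_mul_den (a i)
    have hne : ∀ i, (a i).num * (a i).den ≠ 0 := fun i =>
      mul_ne_zero (Rat.num_ne_zero.2 (ha i)) (Int.natCast_ne_zero.2 (a i).den_ne_zero)
    exact (hsq ℚ).2 (diagIsotropic_rat_of_everywhereLocally hne (h.mono fun K _ _ => (hsq K).1))
end
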